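/- Let f(u) = u·(log(1+u))^a with 1 < a < 2. Let V, φ ∈ C¹([−1,1]) be nonnegative even functions with V(0) > 0, φ(0) > 0, φ(1) = 0, with V′ ≤ 0 and φ′ ≤ 0 on [0,1/3], and with 0 ≤ V(x) ≤ V(1/3) and 0 ≤ φ(x) ≤ φ(1/3) for all x ∈ [1/3,1]; assume moreover φ ∈ C²([−1,1]) and for some r ∈ (0,1): φ > 0 and V > 0 on [0,r] and φ″ ≥ 0 on [r,1]. Let λ > 0, let 0 < T < ∞, and let u be a nonnegative classical solution on [0,T)×[−1,1] of u_t = u_xx + V(x)f(u) with u(t,±1) = 0 and u(0,·) = λφ, satisfying ∂_t u ≥ 0 and blowing up at time T (limsup_{t→T⁻} max_{x∈[−1,1]} u(t,x) = +∞). Then there exist constants C₂ ≥ C₁ > 0 such that for all t ∈ (T/2,T) and all x ∈ (−1,1): C₁(1−|x|)·exp[C₁(T−t)^{−1/(a−1)}] ≤ u(t,x) ≤ u(t,0) ≤ exp[C₂(T−t)^{−1/(a−1)}]. -/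

import Mathlib

open Set Metric Filter

open scoped Topology
open Real (exp log)

/-!
Reflecting the solution about points of `[0, 1/3]` and comparing shows that `u t` is even with
maximum at `0`, so that `m t = u t 0` satisfies `m' ≤ V 0 * f m`. For the converse inequality, the
time increments `u (t + h) x - u t x` are nonnegative supersolutions of the heat equation. As `u`
blows up, the initial rate is positive on some interval, and this positivity spreads over `(-1, 1)`;
the comparison of Friedman and McLeod then gives `δ f(u) ≤ u_t`. Both inequalities become linear for
`log (1 + m) ^ (1 - a)`, which yields the two bounds on `u t 0`.

The lower bound is carried from `0` to `x` during the time `T - t` by the travelling wave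
`exp (μ (μ t - x)) - 1` of the heat equation. This costs only a factor `exp (-1 / (T - t))`, which
`exp (c * (T - t) ^ (-1 / (a - 1)))` absorbs because `1 / (a - 1) > 1`.
-/

section SecondDerivative

/-- `f` is differentiable near `x` and its derivative has derivative `f₂` at `x`. Unlike the
equation `deriv (deriv f) x = f₂`, this is never satisfied through the junk value of `deriv`. -/
def HasSecondDerivAt (f : ℝ → ℝ) (f₂ x : ℝ) : Prop :=
  ∃ f₁ : ℝ → ℝ, (∀ᶠ y in 𝓝 x, HasDerivAt f (f₁ y) y) ∧ HasDerivAt f₁ f₂ x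

variable {f g : ℝ → ℝ} {f₂ g₂ x : ℝ}

namespace HasSecondDerivAt

lemma add (hf : HasSecondDerivAt f f₂ x) (hg : HasSecondDerivAt g g₂ x) :
    HasSecondDerivAt (fun y ↦ f y + g y) (f₂ + g₂) x := by
  obtain ⟨f₁, hf₁, hf₂⟩ := hf
  obtain ⟨g₁, hg₁, hg₂⟩ := hg
  exact ⟨_, hf₁.mp (hg₁.mono fun _ h₂ h₁ ↦ h₁.add h₂), hf₂.add hg₂⟩

lemma const_mul (c : ℝ) (hf : HasSecondDerivAt f f₂ x) :
    HasSecondDerivAt (fun y ↦ c * f y) (c * f₂) x := by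
  obtain ⟨f₁, hf₁, hf₂⟩ := hf
  exact ⟨_, hf₁.mono fun _ h ↦ h.const_mul c, hf₂.const_mul c⟩

lemma sub (hf : HasSecondDerivAt f f₂ x) (hg : HasSecondDerivAt g g₂ x) :
    HasSecondDerivAt (fun y ↦ f y - g y) (f₂ - g₂) x := by
  obtain ⟨f₁, hf₁, hf₂⟩ := hf
  obtain ⟨g₁, hg₁, hg₂⟩ := hg
  exact ⟨_, hf₁.mp (hg₁.mono fun _ h₂ h₁ ↦ h₁.sub h₂), hf₂.sub hg₂⟩

lemma sub_const (c : ℝ) (hf : HasSecondDerivAt f f₂ x) :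
    HasSecondDerivAt (fun y ↦ f y - c) f₂ x := by
  obtain ⟨f₁, hf₁, hf₂⟩ := hf
  exact ⟨_, hf₁.mono fun _ h ↦ h.sub_const c, hf₂⟩

lemma comp_const_sub (c : ℝ) (hf : HasSecondDerivAt f f₂ (c - x)) :
    HasSecondDerivAt (fun y ↦ f (c - y)) f₂ x := by
  obtain ⟨f₁, hf₁, hf₂⟩ := hf
  have hcont : ContinuousAt (fun y ↦ c - y) x := by fun_prop
  refine ⟨fun y ↦ -f₁ (c - y), (hcont.eventually hf₁).mono fun y hy ↦ ?_, ?_⟩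
  · exact HasDerivAt.comp_const_sub c y hy
  · exact (HasDerivAt.comp_const_sub c x hf₂).neg.congr_deriv (neg_neg f₂)

lemma nonneg_of_isLocalMin (hf : HasSecondDerivAt f f₂ x) (hmin : IsLocalMin f x) : 0 ≤ f₂ := by
  obtain ⟨f₁, hf₁, hf₂⟩ := hf
  have hderiv : deriv f =ᶠ[𝓝 x] f₁ := hf₁.mono fun _ h ↦ h.deriv
  have hderiv₂ : deriv (deriv f) x = f₂ := by rw [hderiv.deriv_eq, hf₂.deriv]
  by_contra! hneg
  have hmax : IsLocalMax f x := isLocalMax_of_deriv_deriv_neg (hderiv₂ ▸ hneg)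
    hmin.deriv_eq_zero hf₁.self_of_nhds.continuousAt
  have hconst : f =ᶠ[𝓝 x] fun _ ↦ f x := by
    filter_upwards [hmin, hmax] with y h₁ h₂ using le_antisymm h₂ h₁
  have hzero : deriv (deriv f) x = 0 := by
    rw [hconst.deriv.deriv_eq]
    simp
  exact hneg.ne (hderiv₂ ▸ hzero)

end HasSecondDerivAt

lemma hasSecondDerivAt_of_contDiffAt (hf : ContDiffAt ℝ 2 f x) :
    HasSecondDerivAt f (deriv (deriv f) x) x := by
  have hf' : ContDiffAt ℝ 1 (deriv f) x := hf.derivWithin (by norm_num)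
  refine ⟨deriv f, ?_, (hf'.differentiableAt one_ne_zero).hasDerivAt⟩
  filter_upwards [hf.eventually (by simp)] with y hy
  exact (hy.differentiableAt two_ne_zero).hasDerivAt

lemma hasSecondDerivAt_parabola (α β x : ℝ) :
    HasSecondDerivAt (fun y ↦ (y - α) * (β - y)) (-2) x := by
  refine ⟨fun y ↦ (β - y) - (y - α), Eventually.of_forall fun y ↦ ?_, ?_⟩
  · exact (((hasDerivAt_id y).sub_const α).mul ((hasDerivAt_id y).const_sub β)).congr_deriv
      (by simp only [id]; ring)
  · exact (((hasDerivAt_id x).const_sub β).sub ((hasDerivAt_id x).sub_const α)).congr_deriv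
      (by norm_num)

end SecondDerivative

section ComparisonPrinciple

variable {t₀ t₁ α β : ℝ}

lemma nonneg_of_deriv_pos_at_neg_min {D : ℝ → ℝ → ℝ}
    (hD : ContinuousOn (fun q : ℝ × ℝ ↦ D q.1 q.2) (Icc t₀ t₁ ×ˢ Icc α β))
    (hinit : ∀ x ∈ Icc α β, 0 ≤ D t₀ x)
    (hleft : ∀ t ∈ Icc t₀ t₁, 0 ≤ D t α) (hright : ∀ t ∈ Icc t₀ t₁, 0 ≤ D t β)
    (htouch : ∀ t ∈ Ioc t₀ t₁, ∀ x ∈ Ioo α β, D t x < 0 → IsLocalMin (D t) x →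
      ∃ D', HasDerivAt (D · x) D' t ∧ 0 < D') :
    ∀ t ∈ Icc t₀ t₁, ∀ x ∈ Icc α β, 0 ≤ D t x := by
  by_contra! ⟨t, ht, x, hx, hneg⟩
  obtain ⟨⟨s, y⟩, ⟨hs, hy⟩, hmin⟩ :=
    (isCompact_Icc.prod isCompact_Icc).exists_isMinOn ⟨(t, x), ht, hx⟩ hD
  replace hmin : ∀ s' ∈ Icc t₀ t₁, ∀ y' ∈ Icc α β, D s y ≤ D s' y' :=
    fun s' hs' y' hy' ↦ hmin (a := (s', y')) ⟨hs', hy'⟩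
  replace hneg : D s y < 0 := (hmin t ht x hx).trans_lt hneg
  have hs₀ : t₀ < s := hs.1.lt_of_ne' fun h ↦ ((h ▸ hinit y hy).trans_lt hneg).false
  have hyα : α < y := hy.1.lt_of_ne' fun h ↦ ((h ▸ hleft s hs).trans_lt hneg).false
  have hyβ : y < β := hy.2.lt_of_ne fun h ↦ ((h ▸ hright s hs).trans_lt hneg).false
  have hlocal : IsLocalMin (D s) y := by
    filter_upwards [Icc_mem_nhds hyα hyβ] with z hz using hmin s hs z hz
  obtain ⟨D', hD', hD'_pos⟩ := htouch s ⟨hs₀, hs.2⟩ y ⟨hyα, hyβ⟩ hneg hlocal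
  refine hD'_pos.not_ge (le_of_tendsto (hasDerivAt_iff_tendsto_slope_left_right.1 hD').1 ?_)
  filter_upwards [Ioo_mem_nhdsLT hs₀] with z hz
  rw [slope_def_field]
  exact div_nonpos_of_nonneg_of_nonpos
    (sub_nonneg.2 (hmin z ⟨hz.1.le, hz.2.le.trans hs.2⟩ y hy)) (sub_nonpos.2 hz.2.le)

lemma nonneg_of_mul_le_deriv_at_neg_min {D : ℝ → ℝ → ℝ} {K : ℝ}
    (hD : ContinuousOn (fun q : ℝ × ℝ ↦ D q.1 q.2) (Icc t₀ t₁ ×ˢ Icc α β))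
    (hinit : ∀ x ∈ Icc α β, 0 ≤ D t₀ x)
    (hleft : ∀ t ∈ Icc t₀ t₁, 0 ≤ D t α) (hright : ∀ t ∈ Icc t₀ t₁, 0 ≤ D t β)
    (htouch : ∀ t ∈ Ioc t₀ t₁, ∀ x ∈ Ioo α β, D t x < 0 → IsLocalMin (D t) x →
      ∃ D', HasDerivAt (D · x) D' t ∧ K * D t x ≤ D') :
    ∀ t ∈ Icc t₀ t₁, ∀ x ∈ Icc α β, 0 ≤ D t x := by
  have hpos : ∀ t, 0 < exp (-(K + 1) * t) := fun t ↦ Real.exp_pos _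
  suffices ∀ t ∈ Icc t₀ t₁, ∀ x ∈ Icc α β, 0 ≤ exp (-(K + 1) * t) * D t x from
    fun t ht x hx ↦ nonneg_of_mul_nonneg_right (this t ht x hx) (hpos t)
  refine nonneg_of_deriv_pos_at_neg_min (ContinuousOn.mul (by fun_prop) hD)
    (fun x hx ↦ mul_nonneg (hpos _).le (hinit x hx))
    (fun t ht ↦ mul_nonneg (hpos _).le (hleft t ht))
    (fun t ht ↦ mul_nonneg (hpos _).le (hright t ht)) fun t ht x hx hneg hmin ↦ ?_
  replace hneg : D t x < 0 := neg_of_mul_neg_right hneg (hpos t).le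
  obtain ⟨D', hD', hle⟩ := htouch t ht x hx hneg
    (hmin.mono fun y hy ↦ le_of_mul_le_mul_left hy (hpos t))
  have hexp : HasDerivAt (fun s ↦ exp (-(K + 1) * s)) (exp (-(K + 1) * t) * -(K + 1)) t := by
    simpa using ((hasDerivAt_id t).const_mul (-(K + 1))).exp
  refine ⟨exp (-(K + 1) * t) * (D' - (K + 1) * D t x), (hexp.mul hD').congr_deriv (by ring), ?_⟩
  exact mul_pos (hpos t) (by linarith)

/-- The inequality `v_t ≤ v_xx + F(x, v)` at the point `(t, x)`. -/
def IsSubsolutionAt (F : ℝ → ℝ → ℝ) (v : ℝ → ℝ → ℝ) (t x : ℝ) : Prop :=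
  ∃ vxx vt, HasSecondDerivAt (v t) vxx x ∧ HasDerivAt (v · x) vt t ∧ vt ≤ vxx + F x (v t x)

/-- The inequality `v_t ≥ v_xx + F(x, v)` at the point `(t, x)`. -/
def IsSupersolutionAt (F : ℝ → ℝ → ℝ) (v : ℝ → ℝ → ℝ) (t x : ℝ) : Prop :=
  ∃ vxx vt, HasSecondDerivAt (v t) vxx x ∧ HasDerivAt (v · x) vt t ∧ vxx + F x (v t x) ≤ vt

variable {v w : ℝ → ℝ → ℝ}

theorem subsolution_le_supersolution {F : ℝ → ℝ → ℝ} {K : ℝ}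
    (hv : ContinuousOn (fun q : ℝ × ℝ ↦ v q.1 q.2) (Icc t₀ t₁ ×ˢ Icc α β))
    (hw : ContinuousOn (fun q : ℝ × ℝ ↦ w q.1 q.2) (Icc t₀ t₁ ×ˢ Icc α β))
    (hsub : ∀ t ∈ Ioc t₀ t₁, ∀ x ∈ Ioo α β, IsSubsolutionAt F v t x)
    (hsuper : ∀ t ∈ Ioc t₀ t₁, ∀ x ∈ Ioo α β, IsSupersolutionAt F w t x)
    (hF : ∀ t ∈ Ioc t₀ t₁, ∀ x ∈ Ioo α β, w t x ≤ v t x →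
      F x (v t x) - F x (w t x) ≤ K * (v t x - w t x))
    (hinit : ∀ x ∈ Icc α β, v t₀ x ≤ w t₀ x)
    (hleft : ∀ t ∈ Icc t₀ t₁, v t α ≤ w t α) (hright : ∀ t ∈ Icc t₀ t₁, v t β ≤ w t β) :
    ∀ t ∈ Icc t₀ t₁, ∀ x ∈ Icc α β, v t x ≤ w t x := by
  suffices ∀ t ∈ Icc t₀ t₁, ∀ x ∈ Icc α β, 0 ≤ w t x - v t x from
    fun t ht x hx ↦ sub_nonneg.1 (this t ht x hx)
  refine nonneg_of_mul_le_deriv_at_neg_min (K := K) (hw.sub hv)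
    (fun x hx ↦ sub_nonneg.2 (hinit x hx)) (fun t ht ↦ sub_nonneg.2 (hleft t ht))
    (fun t ht ↦ sub_nonneg.2 (hright t ht)) fun t ht x hx hneg hmin ↦ ?_
  obtain ⟨vxx, vt, hvxx, hvt, hv_le⟩ := hsub t ht x hx
  obtain ⟨wxx, wt, hwxx, hwt, hw_le⟩ := hsuper t ht x hx
  have hxx : 0 ≤ wxx - vxx := (hwxx.sub hvxx).nonneg_of_isLocalMin hmin
  have hLip := hF t ht x hx (sub_neg.1 hneg).le
  exact ⟨wt - vt, hwt.sub hvt, by linarith⟩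

end ComparisonPrinciple

section HeatEquation

variable {t₀ t₁ α β : ℝ} {v w W : ℝ → ℝ → ℝ}

lemma heat_subsolution_le_supersolution
    (hv : ContinuousOn (fun q : ℝ × ℝ ↦ v q.1 q.2) (Icc t₀ t₁ ×ˢ Icc α β))
    (hw : ContinuousOn (fun q : ℝ × ℝ ↦ w q.1 q.2) (Icc t₀ t₁ ×ˢ Icc α β))
    (hsub : ∀ t ∈ Ioc t₀ t₁, ∀ x ∈ Ioo α β, IsSubsolutionAt 0 v t x)
    (hsuper : ∀ t ∈ Ioc t₀ t₁, ∀ x ∈ Ioo α β, IsSupersolutionAt 0 w t x)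
    (hinit : ∀ x ∈ Icc α β, v t₀ x ≤ w t₀ x)
    (hleft : ∀ t ∈ Icc t₀ t₁, v t α ≤ w t α) (hright : ∀ t ∈ Icc t₀ t₁, v t β ≤ w t β) :
    ∀ t ∈ Icc t₀ t₁, ∀ x ∈ Icc α β, v t x ≤ w t x :=
  subsolution_le_supersolution (K := 0) hv hw hsub hsuper
    (fun _ _ _ _ _ ↦ by simp) hinit hleft hright

lemma heat_parabola_isSubsolutionAt (A t₀ α β t x : ℝ) :
    IsSubsolutionAt 0 (fun t x ↦ A * ((x - α) * (β - x) - 2 * (t - t₀))) t x := by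
  refine ⟨_, _, ((hasSecondDerivAt_parabola α β x).sub_const _).const_mul A,
    ((((hasDerivAt_id t).sub_const t₀).const_mul 2).const_sub _).const_mul A, ?_⟩
  simp

lemma heat_parabola_le {A : ℝ} (hA : 0 ≤ A)
    (hW : ContinuousOn (fun q : ℝ × ℝ ↦ W q.1 q.2) (Icc t₀ t₁ ×ˢ Icc α β))
    (hsuper : ∀ t ∈ Ioc t₀ t₁, ∀ x ∈ Ioo α β, IsSupersolutionAt 0 W t x)
    (hinit : ∀ x ∈ Icc α β, A * ((x - α) * (β - x)) ≤ W t₀ x)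
    (hleft : ∀ t ∈ Icc t₀ t₁, 0 ≤ W t α) (hright : ∀ t ∈ Icc t₀ t₁, 0 ≤ W t β) :
    ∀ t ∈ Icc t₀ t₁, ∀ x ∈ Icc α β, A * ((x - α) * (β - x) - 2 * (t - t₀)) ≤ W t x := by
  have hdecay : ∀ t ∈ Icc t₀ t₁, A * (0 - 2 * (t - t₀)) ≤ 0 := fun t ht ↦
    mul_nonpos_of_nonneg_of_nonpos hA (by linarith [ht.1])
  refine heat_subsolution_le_supersolution (by fun_prop) hW
    (fun t _ x _ ↦ heat_parabola_isSubsolutionAt A t₀ α β t x) hsuper (fun x hx ↦ ?_)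
    (fun t ht ↦ ?_) fun t ht ↦ ?_
  · simpa using hinit x hx
  · simpa using (hdecay t ht).trans (hleft t ht)
  · simpa using (hdecay t ht).trans (hright t ht)

/-- The solution of the heat equation travelling to the right with speed `μ` that vanishes at the
front `x = p + μ (t - t₀)`; it is the lower barrier carrying positivity from `p` to the right. -/
noncomputable def heatWave (μ t₀ p t x : ℝ) : ℝ := exp (μ * (μ * (t - t₀) - (x - p))) - 1

variable {μ p q m t x : ℝ}

lemma heatWave_nonpos (hμ : 0 ≤ μ) (hx : μ * (t - t₀) ≤ x - p) : heatWave μ t₀ p t x ≤ 0 :=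
  sub_nonpos.2 (Real.exp_le_one_iff.2 (mul_nonpos_of_nonneg_of_nonpos hμ (sub_nonpos.2 hx)))

lemma const_mul_heatWave_isSubsolutionAt (c μ t₀ p t x : ℝ) :
    IsSubsolutionAt 0 (fun t x ↦ c * heatWave μ t₀ p t x) t x := by
  have hx : ∀ y, HasDerivAt (fun y ↦ exp (μ * (μ * (t - t₀) - (y - p))))
      (-μ * exp (μ * (μ * (t - t₀) - (y - p)))) y := fun y ↦ by
    have := (((hasDerivAt_id y).sub_const p).const_sub (μ * (t - t₀))).const_mul μ
    exact this.exp.congr_deriv (by simp only [id]; ring)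
  have ht : HasDerivAt (fun s ↦ exp (μ * (μ * (s - t₀) - (x - p))))
      (μ * μ * exp (μ * (μ * (t - t₀) - (x - p)))) t := by
    have := ((((hasDerivAt_id t).sub_const t₀).const_mul μ).sub_const (x - p)).const_mul μ
    exact this.exp.congr_deriv (by simp only [id]; ring)
  have hxx : HasSecondDerivAt (fun y ↦ exp (μ * (μ * (t - t₀) - (y - p))))
      (-μ * (-μ * exp (μ * (μ * (t - t₀) - (x - p))))) x :=
    ⟨_, Eventually.of_forall hx, (hx x).const_mul (-μ)⟩
  exact ⟨_, _, (hxx.sub_const 1).const_mul c, (ht.sub_const 1).const_mul c,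
    le_of_eq (by simp only [Pi.zero_apply]; ring)⟩

lemma mul_heatWave_le (hμ : 0 ≤ μ) (hm : 0 ≤ m)
    (hW : ContinuousOn (fun q : ℝ × ℝ ↦ W q.1 q.2) (Icc t₀ t₁ ×ˢ Icc p q))
    (hsuper : ∀ t ∈ Ioc t₀ t₁, ∀ x ∈ Ioo p q, IsSupersolutionAt 0 W t x)
    (hq : μ * (t₁ - t₀) ≤ q - p)
    (hinit : ∀ x ∈ Icc p q, 0 ≤ W t₀ x)
    (hleft : ∀ t ∈ Icc t₀ t₁, m ≤ W t p) (hright : ∀ t ∈ Icc t₀ t₁, 0 ≤ W t q) :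
    ∀ t ∈ Icc t₀ t₁, ∀ x ∈ Icc p q,
      m * exp (-(μ * (q - p))) * heatWave μ t₀ p t x ≤ W t x := by
  have hc : 0 ≤ m * exp (-(μ * (q - p))) := by positivity
  have hfront : ∀ t ∈ Icc t₀ t₁, μ * (t - t₀) ≤ q - p := fun t ht ↦
    (mul_le_mul_of_nonneg_left (by linarith [ht.2]) hμ).trans hq
  refine heat_subsolution_le_supersolution (by unfold heatWave; fun_prop) hW
    (fun t _ x _ ↦ const_mul_heatWave_isSubsolutionAt _ μ t₀ p t x) hsuper (fun x hx ↦ ?_)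
    (fun t ht ↦ ?_) fun t ht ↦ ?_
  · refine (mul_nonpos_of_nonneg_of_nonpos hc (heatWave_nonpos hμ ?_)).trans (hinit x hx)
    simpa using hx.1
  · calc m * exp (-(μ * (q - p))) * heatWave μ t₀ p t p
        ≤ m * exp (-(μ * (q - p))) * exp (μ * (q - p)) := by
          refine mul_le_mul_of_nonneg_left ?_ hc
          have : exp (μ * (μ * (t - t₀) - (p - p))) ≤ exp (μ * (q - p)) :=
            Real.exp_le_exp.2 (mul_le_mul_of_nonneg_left (by linarith [hfront t ht]) hμ)
          simp only [heatWave]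
          linarith
      _ = m := by rw [mul_assoc, ← Real.exp_add, neg_add_cancel, Real.exp_zero, mul_one]
      _ ≤ W t p := hleft t ht
  · exact (mul_nonpos_of_nonneg_of_nonpos hc (heatWave_nonpos hμ (hfront t ht))).trans (hright t ht)

lemma heat_linear_le_of_le_left (ht : t₀ < t₁) (hpq : p ≤ q) (hm : 0 ≤ m)
    (hW : ContinuousOn (fun q : ℝ × ℝ ↦ W q.1 q.2) (Icc t₀ t₁ ×ˢ Icc p q))
    (hsuper : ∀ t ∈ Ioc t₀ t₁, ∀ x ∈ Ioo p q, IsSupersolutionAt 0 W t x)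
    (hinit : ∀ x ∈ Icc p q, 0 ≤ W t₀ x)
    (hleft : ∀ t ∈ Icc t₀ t₁, m ≤ W t p) (hright : ∀ t ∈ Icc t₀ t₁, 0 ≤ W t q) :
    ∀ x ∈ Icc p q,
      m * exp (-((q - p) ^ 2 / (t₁ - t₀))) * ((q - p) / (t₁ - t₀)) * (q - x) ≤ W t₁ x := by
  intro x hx
  have hτ : 0 < t₁ - t₀ := sub_pos.2 ht
  -- At this speed the wave issued from `p` at time `t₀` reaches `q` at time `t₁`.
  set μ := (q - p) / (t₁ - t₀) with hμ_def
  have hμ : 0 ≤ μ := div_nonneg (sub_nonneg.2 hpq) hτ.le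
  have hreach : μ * (t₁ - t₀) = q - p := div_mul_cancel₀ _ hτ.ne'
  have hexponent : (q - p) ^ 2 / (t₁ - t₀) = μ * (q - p) := by rw [hμ_def]; ring
  have hwave : μ * (q - x) ≤ heatWave μ t₀ p t₁ x := by
    have := Real.add_one_le_exp (μ * (q - x))
    rw [heatWave, hreach, sub_sub_sub_cancel_right]
    linarith
  rw [hexponent, mul_assoc]
  exact (mul_le_mul_of_nonneg_left hwave (by positivity)).trans
    (mul_heatWave_le hμ hm hW hsuper hreach.le hinit hleft hright t₁
      (right_mem_Icc.2 ht.le) x hx)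

end HeatEquation

section Reaction

/-- A nondecreasing convex differentiable nonlinearity on `[0, ∞)` vanishing at `0`. -/
structure IsConvexReaction (f : ℝ → ℝ) : Prop where
  convexOn : ConvexOn ℝ (Ici 0) f
  monotoneOn : MonotoneOn f (Ici 0)
  differentiableAt : ∀ y, 0 ≤ y → DifferentiableAt ℝ f y
  map_zero : f 0 = 0

namespace IsConvexReaction

variable {f V : ℝ → ℝ} {x y B k K : ℝ}

lemma nonneg (hf : IsConvexReaction f) (hy : 0 ≤ y) : 0 ≤ f y :=
  hf.map_zero.symm.trans_le (hf.monotoneOn self_mem_Ici hy hy)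

lemma continuousOn (hf : IsConvexReaction f) : ContinuousOn f (Ici 0) := fun y hy ↦
  (hf.differentiableAt y hy).continuousAt.continuousWithinAt

lemma deriv_nonneg (hf : IsConvexReaction f) (hy : 0 ≤ y) : 0 ≤ deriv f y := by
  rw [← (hf.differentiableAt y hy).derivWithin (uniqueDiffOn_Ici 0 y hy)]
  exact hf.monotoneOn.derivWithin_nonneg

lemma deriv_le_deriv (hf : IsConvexReaction f) (hx : 0 ≤ x) (hxy : x ≤ y) :
    deriv f x ≤ deriv f y :=
  hf.convexOn.monotoneOn_deriv hf.differentiableAt hx (hx.trans hxy) hxy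

lemma add_deriv_mul_sub_le (hf : IsConvexReaction f) (hx : 0 ≤ x) (hy : 0 ≤ y) :
    f x + deriv f x * (y - x) ≤ f y := by
  rcases lt_trichotomy x y with hxy | rfl | hyx
  · have := hf.convexOn.deriv_le_slope hx hy hxy (hf.differentiableAt x hx)
    rw [slope_def_field, le_div_iff₀ (sub_pos.2 hxy)] at this
    linarith
  · simp
  · have := hf.convexOn.slope_le_deriv hy hx hyx (hf.differentiableAt x hx)
    rw [slope_def_field, div_le_iff₀ (sub_pos.2 hyx)] at this
    linarith

lemma sub_le_deriv_mul_sub (hf : IsConvexReaction f) (hx : 0 ≤ x) (hxy : x ≤ y) (hyB : y ≤ B) :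
    f y - f x ≤ deriv f B * (y - x) := by
  have hy : 0 ≤ y := hx.trans hxy
  have htangent := hf.add_deriv_mul_sub_le hy hx
  have := mul_le_mul_of_nonneg_right (hf.deriv_le_deriv hy hyB) (sub_nonneg.2 hxy)
  linarith

lemma le_deriv_mul (hf : IsConvexReaction f) (hy : 0 ≤ y) (hyB : y ≤ B) : f y ≤ deriv f B * y := by
  simpa [hf.map_zero] using hf.sub_le_deriv_mul_sub le_rfl hy hyB

lemma mul_sub_mul_le (hf : IsConvexReaction f) (hk : k ∈ Icc 0 K) (hx : 0 ≤ x) (hxy : x ≤ y)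
    (hyB : y ≤ B) : k * f y - k * f x ≤ K * deriv f B * (y - x) :=
  calc k * f y - k * f x = k * (f y - f x) := by ring
    _ ≤ k * (deriv f B * (y - x)) :=
      mul_le_mul_of_nonneg_left (hf.sub_le_deriv_mul_sub hx hxy hyB) hk.1
    _ ≤ K * (deriv f B * (y - x)) := mul_le_mul_of_nonneg_right hk.2
      (mul_nonneg (hf.deriv_nonneg (hx.trans (hxy.trans hyB))) (sub_nonneg.2 hxy))
    _ = K * deriv f B * (y - x) := by ring

theorem subsolution_le_supersolution (hf : IsConvexReaction f) {t₀ t₁ α β : ℝ}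
    {v w : ℝ → ℝ → ℝ} (hV : ∀ x ∈ Ioo α β, V x ∈ Icc 0 K)
    (hv : ContinuousOn (fun q : ℝ × ℝ ↦ v q.1 q.2) (Icc t₀ t₁ ×ˢ Icc α β))
    (hw : ContinuousOn (fun q : ℝ × ℝ ↦ w q.1 q.2) (Icc t₀ t₁ ×ˢ Icc α β))
    (hw₀ : ∀ t ∈ Icc t₀ t₁, ∀ x ∈ Icc α β, 0 ≤ w t x)
    (hsub : ∀ t ∈ Ioc t₀ t₁, ∀ x ∈ Ioo α β, IsSubsolutionAt (fun x y ↦ V x * f y) v t x)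
    (hsuper : ∀ t ∈ Ioc t₀ t₁, ∀ x ∈ Ioo α β, IsSupersolutionAt (fun x y ↦ V x * f y) w t x)
    (hinit : ∀ x ∈ Icc α β, v t₀ x ≤ w t₀ x)
    (hleft : ∀ t ∈ Icc t₀ t₁, v t α ≤ w t α) (hright : ∀ t ∈ Icc t₀ t₁, v t β ≤ w t β) :
    ∀ t ∈ Icc t₀ t₁, ∀ x ∈ Icc α β, v t x ≤ w t x := by
  obtain ⟨B, hB⟩ := (isCompact_Icc.prod isCompact_Icc).bddAbove_image hv
  refine _root_.subsolution_le_supersolution (K := K * deriv f B) hv hw hsub hsuper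
    (fun t ht x hx hle ↦ ?_) hinit hleft hright
  have ht' := Ioc_subset_Icc_self ht
  have hx' := Ioo_subset_Icc_self hx
  exact hf.mul_sub_mul_le (hV x hx) (hw₀ t ht' x hx') hle (hB ⟨(t, x), ⟨ht', hx'⟩, rfl⟩)

end IsConvexReaction

/-- The nonlinearity `u (log (1 + u)) ^ a`, meant for `0 ≤ u`. -/
noncomputable def logReaction (a u : ℝ) : ℝ := u * log (1 + u) ^ a

variable {a u : ℝ}

lemma log_one_add_nonneg (hu : 0 ≤ u) : 0 ≤ log (1 + u) := Real.log_nonneg (by linarith)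

lemma hasDerivAt_logReaction (ha : 1 ≤ a) (hu : 0 ≤ u) :
    HasDerivAt (logReaction a)
      (log (1 + u) ^ a + a * (u / (1 + u)) * log (1 + u) ^ (a - 1)) u := by
  have hlog : HasDerivAt (fun y ↦ log (1 + y)) (1 / (1 + u)) u :=
    ((hasDerivAt_id u).const_add 1).log (by simp only [id]; positivity)
  exact ((hasDerivAt_id u).mul (hlog.rpow_const (Or.inr ha))).congr_deriv
    (by simp only [id]; ring)

lemma deriv_logReaction_monotoneOn (ha : 1 ≤ a) : MonotoneOn (deriv (logReaction a)) (Ici 0) := by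
  intro u (hu : 0 ≤ u) v hv huv
  rw [(hasDerivAt_logReaction ha hu).deriv, (hasDerivAt_logReaction ha hv).deriv]
  have hlog₀ : 0 ≤ log (1 + u) := log_one_add_nonneg hu
  have hlog : log (1 + u) ≤ log (1 + v) := Real.log_le_log (by linarith) (by linarith)
  have hfrac : u / (1 + u) ≤ v / (1 + v) := by
    rw [div_le_div_iff₀ (by linarith) (by linarith)]
    nlinarith
  have hfrac₀ : 0 ≤ v / (1 + v) := le_trans (by positivity) hfrac
  have : 0 ≤ a - 1 := sub_nonneg.2 ha
  gcongr

lemma isConvexReaction_logReaction (ha : 1 ≤ a) : IsConvexReaction (logReaction a) := by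
  have hdiff : ∀ y, 0 ≤ y → DifferentiableAt ℝ (logReaction a) y := fun y hy ↦
    (hasDerivAt_logReaction ha hy).differentiableAt
  have hcont : ContinuousOn (logReaction a) (Ici 0) := fun y hy ↦
    (hdiff y hy).continuousAt.continuousWithinAt
  have hdiff' : DifferentiableOn ℝ (logReaction a) (interior (Ici 0)) := fun y hy ↦
    (hdiff y (interior_subset hy)).differentiableWithinAt
  refine ⟨?_, monotoneOn_of_deriv_nonneg (convex_Ici 0) hcont hdiff' fun u hu ↦ ?_, hdiff,
    by simp [logReaction]⟩
  · exact ((deriv_logReaction_monotoneOn ha).mono interior_subset).convexOn_of_deriv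
      (convex_Ici 0) hcont hdiff'
  · have hu₀ : 0 ≤ u := interior_subset hu
    have hlog₀ := log_one_add_nonneg hu₀
    rw [(hasDerivAt_logReaction ha hu₀).deriv]
    positivity

end Reaction

section Solutions

/-- A nonnegative classical solution of `u_t = u_xx + V f(u)` on `[0, T) × [-1, 1]` with zero
boundary values. -/
structure IsClassicalSolution (f V : ℝ → ℝ) (T : ℝ) (u : ℝ → ℝ → ℝ) : Prop where
  continuousOn : ContinuousOn (fun q : ℝ × ℝ ↦ u q.1 q.2) (Ico 0 T ×ˢ Icc (-1) 1)
  nonneg : ∀ t ∈ Ico 0 T, ∀ x ∈ Icc (-1 : ℝ) 1, 0 ≤ u t x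
  regular : ∀ t ∈ Ioo 0 T, ∀ x ∈ Ioo (-1 : ℝ) 1,
    DifferentiableAt ℝ (u · x) t ∧ ContDiffAt ℝ 2 (u t) x
  deriv_eq : ∀ t ∈ Ioo 0 T, ∀ x ∈ Ioo (-1 : ℝ) 1,
    deriv (u · x) t = deriv (deriv (u t)) x + V x * f (u t x)
  boundary : ∀ t ∈ Ico 0 T, u t (-1) = 0 ∧ u t 1 = 0

/-- A classical solution that is nondecreasing in time. -/
structure IsMonotoneSolution (f V : ℝ → ℝ) (T : ℝ) (u : ℝ → ℝ → ℝ) : Prop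
    extends IsClassicalSolution f V T u where
  deriv_nonneg : ∀ t ∈ Ioo 0 T, ∀ x ∈ Ioo (-1 : ℝ) 1, 0 ≤ deriv (u · x) t

/-- An even function on `[-1, 1]` that is nonincreasing on `[0, 1/3]` and is at most its value at
`1/3` beyond; equivalently, the form below, which is what reflection arguments use. -/
structure IsPeaked (G : ℝ → ℝ) : Prop where
  even : ∀ x ∈ Icc (-1 : ℝ) 1, G (-x) = G x
  le_of_abs_le : ∀ p q : ℝ, |p| ≤ 1 / 3 → |p| ≤ |q| → |q| ≤ 1 → G q ≤ G p

lemma apply_abs_eq_of_even {G : ℝ → ℝ} (hG : ∀ x ∈ Icc (-1 : ℝ) 1, G (-x) = G x) {x : ℝ}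
    (hx : x ∈ Icc (-1) 1) : G |x| = G x := by
  rcases abs_choice x with h | h <;> rw [h]
  exact hG x hx

namespace IsPeaked

variable {G H : ℝ → ℝ}

lemma of_antitoneOn (heven : ∀ x ∈ Icc (-1 : ℝ) 1, G (-x) = G x)
    (hanti : AntitoneOn G (Icc 0 (1 / 3))) (hle : ∀ x ∈ Icc (1 / 3 : ℝ) 1, G x ≤ G (1 / 3)) :
    IsPeaked G where
  even := heven
  le_of_abs_le p q hp hpq hq := by
    rw [← apply_abs_eq_of_even heven (abs_le.1 hq),
      ← apply_abs_eq_of_even heven (abs_le.1 (hpq.trans hq))]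
    have hp' : |p| ∈ Icc (0 : ℝ) (1 / 3) := ⟨abs_nonneg p, hp⟩
    rcases le_total |q| (1 / 3) with h | h
    · exact hanti hp' ⟨abs_nonneg q, h⟩ hpq
    · exact (hle _ ⟨h, hq⟩).trans (hanti hp' ⟨by norm_num, le_rfl⟩ hp)

lemma of_eqOn_const_mul (hG : IsPeaked G) {c : ℝ} (hc : 0 ≤ c)
    (h : ∀ x ∈ Icc (-1 : ℝ) 1, H x = c * G x) : IsPeaked H where
  even x hx := by
    rw [h x hx, h (-x) ⟨by linarith [hx.2], by linarith [hx.1]⟩, hG.even x hx]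
  le_of_abs_le p q hp hpq hq := by
    rw [h p (abs_le.1 (hpq.trans hq)), h q (abs_le.1 hq)]
    exact mul_le_mul_of_nonneg_left (hG.le_of_abs_le p q hp hpq hq) hc

lemma le_zero (hG : IsPeaked G) {x : ℝ} (hx : x ∈ Icc (-1 : ℝ) 1) : G x ≤ G 0 :=
  hG.le_of_abs_le 0 x (by norm_num) (by simp) (abs_le.2 hx)

lemma le_reflect (hG : IsPeaked G) {c x : ℝ} (hc : 0 ≤ c) (hcx : c / 2 ≤ x) (hx : x ≤ 1)
    (hxc : x - c ≤ 1 / 3) (hx' : c - x ≤ 1 / 3) : G x ≤ G (c - x) := by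
  have hx_abs : |x| = x := abs_of_nonneg (by linarith)
  exact hG.le_of_abs_le (c - x) x (abs_le.2 ⟨by linarith, hx'⟩)
    (hx_abs.symm ▸ abs_le.2 ⟨by linarith, by linarith⟩) (hx_abs.symm ▸ hx)

end IsPeaked

namespace IsClassicalSolution

variable {f V : ℝ → ℝ} {T K t x α β : ℝ} {u : ℝ → ℝ → ℝ}

lemma isSubsolutionAt (hu : IsClassicalSolution f V T u) (ht : t ∈ Ioo 0 T)
    (hx : x ∈ Ioo (-1) 1) : IsSubsolutionAt (fun x y ↦ V x * f y) u t x :=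
  ⟨_, _, hasSecondDerivAt_of_contDiffAt (hu.regular t ht x hx).2,
    (hu.regular t ht x hx).1.hasDerivAt, (hu.deriv_eq t ht x hx).le⟩

lemma isSupersolutionAt (hu : IsClassicalSolution f V T u) (ht : t ∈ Ioo 0 T)
    (hx : x ∈ Ioo (-1) 1) : IsSupersolutionAt (fun x y ↦ V x * f y) u t x :=
  ⟨_, _, hasSecondDerivAt_of_contDiffAt (hu.regular t ht x hx).2,
    (hu.regular t ht x hx).1.hasDerivAt, (hu.deriv_eq t ht x hx).ge⟩

lemma isSupersolutionAt_heat (hu : IsClassicalSolution f V T u) (hf : IsConvexReaction f)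
    (ht : t ∈ Ioo 0 T) (hx : x ∈ Ioo (-1) 1) (hV : 0 ≤ V x) : IsSupersolutionAt 0 u t x := by
  obtain ⟨uxx, ut, huxx, hut, hle⟩ := hu.isSupersolutionAt ht hx
  have hu₀ := hu.nonneg t (Ioo_subset_Ico_self ht) x (Ioo_subset_Icc_self hx)
  have := mul_nonneg hV (hf.nonneg hu₀)
  exact ⟨uxx, ut, huxx, hut, by simp only [Pi.zero_apply]; linarith⟩

lemma continuousOn_space (hu : IsClassicalSolution f V T u) (ht : t ∈ Ico 0 T) :
    ContinuousOn (u t) (Icc (-1) 1) :=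
  hu.continuousOn.comp (f := fun y : ℝ ↦ (t, y)) (by fun_prop) fun _ hy ↦ ⟨ht, hy⟩

lemma continuousOn_time (hu : IsClassicalSolution f V T u) (hx : x ∈ Icc (-1) 1) :
    ContinuousOn (u · x) (Ico 0 T) :=
  hu.continuousOn.comp (f := fun s : ℝ ↦ (s, x)) (by fun_prop) fun _ hs ↦ ⟨hs, hx⟩

lemma le_reflect (hu : IsClassicalSolution f V T u) (hf : IsConvexReaction f) {c : ℝ}
    (hα : -1 ≤ α) (hβ : β ≤ 1) (hcα : c - α ≤ 1) (hcβ : -1 ≤ c - β)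
    (hV : ∀ x ∈ Icc (-1) 1, V x ∈ Icc 0 K) (hVc : ∀ x ∈ Icc α β, V x ≤ V (c - x))
    (hinit : ∀ x ∈ Icc α β, u 0 x ≤ u 0 (c - x))
    (hleft : ∀ t ∈ Ico 0 T, u t α ≤ u t (c - α))
    (hright : ∀ t ∈ Ico 0 T, u t β ≤ u t (c - β)) :
    ∀ t ∈ Ico 0 T, ∀ x ∈ Icc α β, u t x ≤ u t (c - x) := by
  intro t₁ ht₁ x hx
  have htime : ∀ t ∈ Icc 0 t₁, t ∈ Ico 0 T := fun t ht ↦ ⟨ht.1, ht.2.trans_lt ht₁.2⟩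
  have hspace : ∀ x ∈ Icc α β, x ∈ Icc (-1) 1 := fun x hx ↦ ⟨hα.trans hx.1, hx.2.trans hβ⟩
  have hspace' : ∀ x ∈ Icc α β, c - x ∈ Icc (-1) 1 := fun x hx ↦
    ⟨by linarith [hx.2], by linarith [hx.1]⟩
  refine hf.subsolution_le_supersolution (w := fun t x ↦ u t (c - x))
    (fun x hx ↦ hV x (hspace x (Ioo_subset_Icc_self hx)))
    (hu.continuousOn.mono fun q hq ↦ ⟨htime _ hq.1, hspace _ hq.2⟩)
    (hu.continuousOn.comp (f := fun q : ℝ × ℝ ↦ (q.1, c - q.2)) (by fun_prop)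
      fun q hq ↦ ⟨htime _ hq.1, hspace' _ hq.2⟩)
    (fun t ht x hx ↦ hu.nonneg t (htime t ht) _ (hspace' x hx))
    (fun t ht x hx ↦ hu.isSubsolutionAt ⟨ht.1, (htime t (Ioc_subset_Icc_self ht)).2⟩
      ⟨hα.trans_lt hx.1, hx.2.trans_le hβ⟩)
    (fun t ht x hx ↦ ?_) hinit (fun t ht ↦ hleft t (htime t ht))
    (fun t ht ↦ hright t (htime t ht)) t₁ ⟨ht₁.1, le_rfl⟩ x hx
  have ht' := htime t (Ioc_subset_Icc_self ht)
  obtain ⟨uxx, ut, huxx, hut, hle⟩ := hu.isSupersolutionAt (t := t) (x := c - x) ⟨ht.1, ht'.2⟩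
    ⟨by linarith [hx.2], by linarith [hx.1]⟩
  have := mul_le_mul_of_nonneg_right (hVc x (Ioo_subset_Icc_self hx))
    (hf.nonneg (hu.nonneg t ht' _ (hspace' x (Ioo_subset_Icc_self hx))))
  exact ⟨uxx, ut, huxx.comp_const_sub c, hut, by linarith⟩

variable (hu : IsClassicalSolution f V T u) (hf : IsConvexReaction f)
  (hV : ∀ x ∈ Icc (-1) 1, V x ∈ Icc 0 K)
include hu hf hV

lemma even (hV_even : ∀ x ∈ Icc (-1 : ℝ) 1, V (-x) = V x)
    (hinit : ∀ x ∈ Icc (-1 : ℝ) 1, u 0 (-x) = u 0 x) (ht : t ∈ Ico 0 T) :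
    ∀ x ∈ Icc (-1 : ℝ) 1, u t (-x) = u t x := by
  have hle : ∀ x ∈ Icc (-1 : ℝ) 1, u t x ≤ u t (-x) := by
    simpa using hu.le_reflect hf (c := 0) le_rfl le_rfl (by norm_num) (by norm_num) hV
      (fun x hx ↦ by rw [zero_sub, hV_even x hx]) (fun x hx ↦ by rw [zero_sub, hinit x hx])
      (fun t ht ↦ by simp [hu.boundary t ht]) (fun t ht ↦ by simp [hu.boundary t ht]) t ht
  refine fun x hx ↦ le_antisymm ?_ (hle x hx)
  simpa using hle (-x) ⟨by linarith [hx.2], by linarith [hx.1]⟩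

lemma le_two_thirds_sub (hVp : IsPeaked V) (hu₀ : IsPeaked (u 0)) (ht : t ∈ Ico 0 T) :
    ∀ x ∈ Icc (1 / 3 : ℝ) 1, u t x ≤ u t (2 / 3 - x) := by
  have hreflect {G : ℝ → ℝ} (hG : IsPeaked G) : ∀ x ∈ Icc (1 / 3 : ℝ) 1, G x ≤ G (2 / 3 - x) :=
    fun x hx ↦ hG.le_reflect (by norm_num) (by linarith [hx.1]) hx.2 (by linarith [hx.2])
      (by linarith [hx.1])
  refine hu.le_reflect hf (by norm_num) le_rfl (by norm_num) (by norm_num) hV (hreflect hVp)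
    (hreflect hu₀) (fun t _ ↦ by norm_num) (fun t ht ↦ ?_) t ht
  rw [(hu.boundary t ht).2]
  exact hu.nonneg t ht _ (by norm_num)

lemma le_origin_of_le_two_thirds (hVp : IsPeaked V) (hu₀ : IsPeaked (u 0)) (ht : t ∈ Ico 0 T) :
    ∀ y ∈ Icc (0 : ℝ) (2 / 3), u t y ≤ u t 0 := by
  intro y ⟨hy₀, hy₁⟩
  -- The reflection `x ↦ y - x` exchanges `y` and `0`.
  have hreflect {G : ℝ → ℝ} (hG : IsPeaked G) :
      ∀ x ∈ Icc (y / 2) (y / 2 + 1 / 3), G x ≤ G (y - x) := fun x hx ↦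
    hG.le_reflect hy₀ hx.1 (by linarith [hx.2]) (by linarith [hx.2]) (by linarith [hx.1])
  have h := hu.le_reflect hf (c := y) (by linarith) (by linarith) (by linarith) (by linarith) hV
    (hreflect hVp) (hreflect hu₀) (fun t _ ↦ by rw [sub_half]) (fun t ht ↦ ?_) t ht y
    ⟨by linarith, by linarith⟩
  · simpa using h
  · have h := hu.le_two_thirds_sub hf hV hVp hu₀ ht (y / 2 + 1 / 3) ⟨by linarith, by linarith⟩
    have heven := hu.even hf hV hVp.even hu₀.even ht (2 / 3 - (y / 2 + 1 / 3))
      ⟨by linarith, by linarith⟩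
    rwa [← heven, show -(2 / 3 - (y / 2 + 1 / 3)) = y - (y / 2 + 1 / 3) by ring] at h

theorem le_origin (hVp : IsPeaked V) (hu₀ : IsPeaked (u 0)) (ht : t ∈ Ico 0 T) :
    ∀ x ∈ Icc (-1 : ℝ) 1, u t x ≤ u t 0 := by
  have heven := hu.even hf hV hVp.even hu₀.even ht
  intro x hx
  have hx₁ : |x| ≤ 1 := abs_le.2 hx
  rw [← apply_abs_eq_of_even heven hx]
  rcases le_total |x| (2 / 3) with h | h
  · exact hu.le_origin_of_le_two_thirds hf hV hVp hu₀ ht _ ⟨abs_nonneg x, h⟩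
  · refine (hu.le_two_thirds_sub hf hV hVp hu₀ ht _ ⟨by linarith, hx₁⟩).trans ?_
    rw [← heven _ ⟨by linarith, by linarith⟩, neg_sub]
    exact hu.le_origin_of_le_two_thirds hf hV hVp hu₀ ht _ ⟨by linarith, by linarith⟩

end IsClassicalSolution

end Solutions

section TimeIncrements

variable {f V : ℝ → ℝ} {T t t₀ t₁ h x α β : ℝ} {u : ℝ → ℝ → ℝ}

lemma IsClassicalSolution.continuousOn_increment (hu : IsClassicalSolution f V T u) (hh : 0 ≤ h)
    (ht₀ : 0 ≤ t₀) (ht₁ : t₁ + h < T) (hα : -1 ≤ α) (hβ : β ≤ 1) :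
    ContinuousOn (fun q : ℝ × ℝ ↦ u (q.1 + h) q.2 - u q.1 q.2) (Icc t₀ t₁ ×ˢ Icc α β) := by
  refine ContinuousOn.sub (hu.continuousOn.comp (f := fun q : ℝ × ℝ ↦ (q.1 + h, q.2))
    (by fun_prop) fun q hq ↦ ?_) (hu.continuousOn.mono fun q hq ↦ ?_)
  · exact ⟨⟨by linarith [hq.1.1], by linarith [hq.1.2]⟩, hα.trans hq.2.1, hq.2.2.trans hβ⟩
  · exact ⟨⟨ht₀.trans hq.1.1, by linarith [hq.1.2]⟩, hα.trans hq.2.1, hq.2.2.trans hβ⟩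

namespace IsMonotoneSolution

lemma monotoneOn (hu : IsMonotoneSolution f V T u) (hx : x ∈ Icc (-1) 1) :
    MonotoneOn (u · x) (Ico 0 T) := by
  rcases eq_endpoints_or_mem_Ioo_of_mem_Icc hx with rfl | rfl | hx'
  · exact fun s hs t ht _ ↦ by simp only [hu.boundary s hs, hu.boundary t ht, le_refl]
  · exact fun s hs t ht _ ↦ by simp only [hu.boundary s hs, hu.boundary t ht, le_refl]
  · refine monotoneOn_of_deriv_nonneg (convex_Ico 0 T) (hu.continuousOn_time hx) ?_ ?_ <;>
      rw [interior_Ico]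
    · exact fun t ht ↦ (hu.regular t ht x hx').1.differentiableWithinAt
    · exact fun t ht ↦ hu.deriv_nonneg t ht x hx'

lemma increment_nonneg (hu : IsMonotoneSolution f V T u) (hh : 0 ≤ h) (ht : 0 ≤ t)
    (hth : t + h < T) (hx : x ∈ Icc (-1) 1) : 0 ≤ u (t + h) x - u t x :=
  sub_nonneg.2 (hu.monotoneOn hx ⟨ht, by linarith⟩ ⟨by linarith, hth⟩ (by linarith))

lemma increment_isSupersolutionAt_heat (hu : IsMonotoneSolution f V T u)
    (hf : IsConvexReaction f) (hh : 0 ≤ h) (ht : 0 < t) (hth : t + h < T) (hx : x ∈ Ioo (-1) 1)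
    (hV : 0 ≤ V x) : IsSupersolutionAt 0 (fun t x ↦ u (t + h) x - u t x) t x := by
  have hx' := Ioo_subset_Icc_self hx
  obtain ⟨vxx, vt, hvxx, hvt, hv_le⟩ :=
    hu.isSupersolutionAt (t := t + h) ⟨by linarith, hth⟩ hx
  obtain ⟨wxx, wt, hwxx, hwt, hw_le⟩ := hu.isSubsolutionAt (t := t) ⟨ht, by linarith⟩ hx
  refine ⟨_, _, hvxx.sub hwxx, (hvt.comp_add_const t h).sub hwt, ?_⟩
  have hmono : f (u t x) ≤ f (u (t + h) x) :=
    hf.monotoneOn (hu.nonneg t ⟨ht.le, by linarith⟩ x hx')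
      (hu.nonneg (t + h) ⟨by linarith, hth⟩ x hx')
      (sub_nonneg.1 (hu.increment_nonneg hh ht.le hth hx'))
  have := mul_le_mul_of_nonneg_left hmono hV
  simp only [Pi.zero_apply]
  linarith

end IsMonotoneSolution

end TimeIncrements

section InitialRate

variable {f V g : ℝ → ℝ} {T K t t₁ h x α β c : ℝ} {u : ℝ → ℝ → ℝ}

/-- The rate of change `g'' + V f(g)` at time `0` of a solution starting from `g`. -/
noncomputable def initialRate (f V g : ℝ → ℝ) (x : ℝ) : ℝ := deriv (deriv g) x + V x * f (g x)

lemma continuousOn_initialRate (hf : IsConvexReaction f) (hg : ContDiffOn ℝ 2 g (Ioo α β))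
    (hg₀ : ∀ x ∈ Ioo α β, 0 ≤ g x) (hV : ContinuousOn V (Ioo α β)) :
    ContinuousOn (initialRate f V g) (Ioo α β) := by
  have hg' : ContDiffOn ℝ 1 (deriv g) (Ioo α β) := hg.deriv_of_isOpen isOpen_Ioo (by norm_num)
  exact (hg'.continuousOn_deriv_of_isOpen isOpen_Ioo le_rfl).add
    (hV.mul (hf.continuousOn.comp hg.continuousOn hg₀))

lemma add_mul_parabola_isSubsolutionAt (hf : IsConvexReaction f) (hV : 0 ≤ V x)
    (hg : ContDiffAt ℝ 2 g x) (hg₀ : 0 ≤ g x) (hc : 0 ≤ c) (hrate : c ≤ initialRate f V g x)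
    (ht : t ∈ Icc 0 1) (hp : (x - α) * (β - x) ∈ Icc 0 1) :
    IsSubsolutionAt (fun x y ↦ V x * f y)
      (fun t x ↦ g x + c / 3 * t * ((x - α) * (β - x))) t x := by
  have hp_mul : 0 ≤ c / 3 * t * ((x - α) * (β - x)) :=
    mul_nonneg (mul_nonneg (by positivity) ht.1) hp.1
  refine ⟨_, _, (hasSecondDerivAt_of_contDiffAt hg).add
    ((hasSecondDerivAt_parabola α β x).const_mul (c / 3 * t)),
    (((hasDerivAt_id t).const_mul (c / 3)).mul_const _).const_add _, ?_⟩
  have hreact : V x * f (g x) ≤ V x * f (g x + c / 3 * t * ((x - α) * (β - x))) :=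
    mul_le_mul_of_nonneg_left (hf.monotoneOn hg₀ (add_nonneg hg₀ hp_mul) (by linarith)) hV
  have ht_le : c / 3 * t ≤ c / 3 := mul_le_of_le_one_right (by positivity) ht.2
  have hp_le : c / 3 * ((x - α) * (β - x)) ≤ c / 3 := mul_le_of_le_one_right (by positivity) hp.2
  simp only [initialRate] at hrate
  linarith

namespace IsClassicalSolution

lemma le_initial_of_initialRate_nonpos (hu : IsClassicalSolution f V T u)
    (hf : IsConvexReaction f) (hV : ∀ x ∈ Icc (-1) 1, V x ∈ Icc 0 K)
    (hu₀ : ContDiffOn ℝ 2 (u 0) (Ioo (-1) 1))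
    (hrate : ∀ x ∈ Ioo (-1) 1, initialRate f V (u 0) x ≤ 0) (ht : t ∈ Ico 0 T) :
    ∀ x ∈ Icc (-1) 1, u t x ≤ u 0 x := by
  have htime : ∀ s ∈ Icc 0 t, s ∈ Ico 0 T := fun s hs ↦ ⟨hs.1, hs.2.trans_lt ht.2⟩
  have hzero : (0 : ℝ) ∈ Ico 0 T := ⟨le_rfl, ht.1.trans_lt ht.2⟩
  refine hf.subsolution_le_supersolution (w := fun _ ↦ u 0)
    (fun x hx ↦ hV x (Ioo_subset_Icc_self hx))
    (hu.continuousOn.mono (prod_mono htime subset_rfl))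
    ((hu.continuousOn_space hzero).comp continuousOn_snd fun q hq ↦ hq.2)
    (fun _ _ ↦ hu.nonneg 0 hzero)
    (fun s hs x hx ↦ hu.isSubsolutionAt ⟨hs.1, (htime s (Ioc_subset_Icc_self hs)).2⟩ hx)
    (fun s hs x hx ↦ ⟨_, 0, hasSecondDerivAt_of_contDiffAt
      (hu₀.contDiffAt (isOpen_Ioo.mem_nhds hx)), hasDerivAt_const s (u 0 x), hrate x hx⟩)
    (fun x _ ↦ le_rfl) (fun s hs ↦ ?_) (fun s hs ↦ ?_) t ⟨ht.1, le_rfl⟩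
  · rw [(hu.boundary s (htime s hs)).1, (hu.boundary 0 hzero).1]
  · rw [(hu.boundary s (htime s hs)).2, (hu.boundary 0 hzero).2]

lemma exists_le_initialRate (hu : IsClassicalSolution f V T u)
    (hf : IsConvexReaction f) (hV : ∀ x ∈ Icc (-1) 1, V x ∈ Icc 0 K)
    (hV_cont : ContinuousOn V (Icc (-1) 1)) (hu₀ : ContDiffOn ℝ 2 (u 0) (Ioo (-1) 1))
    (hgrow : ∃ t ∈ Ico 0 T, ∃ x ∈ Icc (-1) 1, u 0 x < u t x) :
    ∃ α β c : ℝ, -1 ≤ α ∧ α < β ∧ β ≤ 1 ∧ 0 < c ∧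
      ∀ x ∈ Ioo α β, c ≤ initialRate f V (u 0) x := by
  obtain ⟨t, ht, y, hy, hlt⟩ := hgrow
  obtain ⟨x, hx, hpos⟩ : ∃ x ∈ Ioo (-1) 1, 0 < initialRate f V (u 0) x := by
    by_contra! h
    exact hlt.not_ge (hu.le_initial_of_initialRate_nonpos hf hV hu₀ h ht y hy)
  have hcont : ContinuousAt (initialRate f V (u 0)) x :=
    (continuousOn_initialRate hf hu₀ (fun x hx ↦ hu.nonneg 0 ⟨le_rfl, ht.1.trans_lt ht.2⟩ x
      (Ioo_subset_Icc_self hx)) (hV_cont.mono Ioo_subset_Icc_self)).continuousAt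
      (isOpen_Ioo.mem_nhds hx)
  have hnear : {y ∈ Ioo (-1) 1 | initialRate f V (u 0) x / 2 ≤ initialRate f V (u 0) y} ∈ 𝓝 x :=
    Filter.inter_mem (isOpen_Ioo.mem_nhds hx)
      ((hcont.eventually (lt_mem_nhds (half_lt_self hpos))).mono fun _ ↦ le_of_lt)
  obtain ⟨α, β, ⟨hα, hβ⟩, hsub⟩ := mem_nhds_iff_exists_Ioo_subset.1 hnear
  have hαβ : α < β := hα.trans hβ
  obtain ⟨hα', hβ'⟩ := (Ioo_subset_Ioo_iff hαβ).1 fun y hy ↦ (hsub hy).1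
  exact ⟨α, β, _, hα', hαβ, hβ', half_pos hpos, fun y hy ↦ (hsub hy).2⟩

end IsClassicalSolution

namespace IsMonotoneSolution

variable (hu : IsMonotoneSolution f V T u) (hf : IsConvexReaction f)
  (hV : ∀ x ∈ Icc (-1) 1, V x ∈ Icc 0 K)
  (hα : -1 ≤ α) (hβ : β ≤ 1) (hαβ : α ≤ β) (hu₀ : ContDiffOn ℝ 2 (u 0) (Ioo (-1) 1)) (hc : 0 ≤ c)
  (hrate : ∀ x ∈ Ioo α β, c ≤ initialRate f V (u 0) x)
include hu hf hV hα hβ hαβ hu₀ hc hrate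

lemma mul_parabola_le_increment_zero (hh : 0 ≤ h) (hh₁ : h ≤ 1) (hhT : h < T) :
    ∀ x ∈ Icc α β, c / 3 * h * ((x - α) * (β - x)) ≤ u h x - u 0 x := by
  have htime : ∀ t ∈ Icc 0 h, t ∈ Ico 0 T := fun t ht ↦ ⟨ht.1, ht.2.trans_lt hhT⟩
  have hspace : Icc α β ⊆ Icc (-1) 1 := Icc_subset_Icc hα hβ
  have hzero : (0 : ℝ) ∈ Ico 0 T := ⟨le_rfl, hh.trans_lt hhT⟩
  have hgrow : ∀ t ∈ Icc 0 h, ∀ x ∈ Icc α β, u 0 x ≤ u t x := fun t ht x hx ↦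
    hu.monotoneOn (hspace hx) hzero (htime t ht) ht.1
  suffices ∀ t ∈ Icc 0 h, ∀ x ∈ Icc α β, u 0 x + c / 3 * t * ((x - α) * (β - x)) ≤ u t x from
    fun x hx ↦ by linarith [this h ⟨hh, le_rfl⟩ x hx]
  refine hf.subsolution_le_supersolution
    (fun x hx ↦ hV x (hspace (Ioo_subset_Icc_self hx)))
    (((hu.continuousOn_space hzero).comp continuousOn_snd fun q hq ↦ hspace hq.2).add
      (by fun_prop))
    (hu.continuousOn.mono (prod_mono htime hspace))
    (fun t ht x hx ↦ hu.nonneg t (htime t ht) x (hspace hx)) (fun t ht x hx ↦ ?_)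
    (fun t ht x hx ↦ hu.isSupersolutionAt ⟨ht.1, (htime t (Ioc_subset_Icc_self ht)).2⟩
      ⟨hα.trans_lt hx.1, hx.2.trans_le hβ⟩) (fun _ _ ↦ by simp)
    (fun t ht ↦ ?_) (fun t ht ↦ ?_)
  · have hx₁ : x ∈ Ioo (-1) 1 := ⟨hα.trans_lt hx.1, hx.2.trans_le hβ⟩
    refine add_mul_parabola_isSubsolutionAt hf (hV x (Ioo_subset_Icc_self hx₁)).1
      (hu₀.contDiffAt (isOpen_Ioo.mem_nhds hx₁)) (hu.nonneg 0 hzero x (Ioo_subset_Icc_self hx₁))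
      hc (hrate x hx) ⟨ht.1.le, ht.2.trans hh₁⟩ ⟨?_, ?_⟩
    · exact mul_nonneg (sub_nonneg.2 hx.1.le) (sub_nonneg.2 hx.2.le)
    · nlinarith [sq_nonneg ((x - α) - (β - x)), hx.1, hx.2]
  · simpa using hgrow t ht α (left_mem_Icc.2 hαβ)
  · simpa using hgrow t ht β (right_mem_Icc.2 hαβ)

lemma le_increment_midpoint (hh : 0 ≤ h) (hh₁ : h ≤ 1)
    (ht₁ : t₁ ≤ (β - α) ^ 2 / 16) (hht : t₁ + h < T) :
    ∀ t ∈ Icc 0 t₁,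
      c / 24 * (β - α) ^ 2 * h ≤ u (t + h) ((α + β) / 2) - u t ((α + β) / 2) := by
  intro t ht
  have hspace : Icc α β ⊆ Icc (-1) 1 := Icc_subset_Icc hα hβ
  have hnonneg : ∀ x ∈ Icc α β, ∀ t ∈ Icc 0 t₁, 0 ≤ u (t + h) x - u t x := fun x hx t ht ↦
    hu.increment_nonneg hh ht.1 (by linarith [ht.2]) (hspace hx)
  have hstart := hu.mul_parabola_le_increment_zero hf hV hα hβ hαβ hu₀ hc hrate hh hh₁
    (by linarith [ht.1, ht.2])
  have hparabola := heat_parabola_le (A := c / 3 * h) (by positivity)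
    (hu.continuousOn_increment hh le_rfl hht hα hβ)
    (fun t ht x hx ↦ hu.increment_isSupersolutionAt_heat hf hh ht.1 (by linarith [ht.2])
      ⟨hα.trans_lt hx.1, hx.2.trans_le hβ⟩ (hV x (hspace (Ioo_subset_Icc_self hx))).1)
    (by simpa using hstart)
    (hnonneg α (left_mem_Icc.2 hαβ)) (hnonneg β (right_mem_Icc.2 hαβ))
    t ht ((α + β) / 2) ⟨by linarith, by linarith⟩
  calc c / 24 * (β - α) ^ 2 * h
      = c / 3 * h * ((β - α) ^ 2 / 8) := by ring
    _ ≤ c / 3 * h * (((α + β) / 2 - α) * (β - (α + β) / 2) - 2 * (t - 0)) :=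
      mul_le_mul_of_nonneg_left (by linarith [ht.2]) (by positivity)
    _ ≤ u (t + h) ((α + β) / 2) - u t ((α + β) / 2) := hparabola

end IsMonotoneSolution

lemma IsMonotoneSolution.mul_one_sub_abs_le_increment (hu : IsMonotoneSolution f V T u)
    (hf : IsConvexReaction f) (hV : ∀ x ∈ Icc (-1) 1, 0 ≤ V x)
    (heven : ∀ t ∈ Ico 0 T, ∀ x ∈ Icc (-1 : ℝ) 1, u t (-x) = u t x) {m y : ℝ} (hm : 0 ≤ m)
    (hy : y ∈ Icc (-1) 1) (hh : 0 ≤ h) (ht₁ : 0 < t₁) (hht : t₁ + h < T)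
    (hle : ∀ t ∈ Icc 0 t₁, m ≤ u (t + h) y - u t y) :
    ∀ x ∈ Icc (-1) 1, m * exp (-((1 + |y|) ^ 2 / t₁)) * ((1 + |y|) / t₁) * (1 - |x|) ≤
      u (t₁ + h) x - u t₁ x := by
  intro x hx
  have habs : ∀ {t}, t ∈ Ico 0 T → ∀ {x}, x ∈ Icc (-1 : ℝ) 1 → u t |x| = u t x := fun ht _ hx ↦
    apply_abs_eq_of_even (heven _ ht) hx
  have hy₁ : |y| ≤ 1 := abs_le.2 hy
  have hy₀ : 0 ≤ |y| := abs_nonneg y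
  have hneg : ∀ {t}, t ∈ Ico 0 T → u t (-|y|) = u t y := fun ht ↦ by
    rw [heven _ ht |y| ⟨by linarith, hy₁⟩, habs ht hy]
  have htime : ∀ t ∈ Icc 0 t₁, t ∈ Ico 0 T := fun t ht ↦ ⟨ht.1, by linarith [ht.2]⟩
  have htime' : ∀ t ∈ Icc 0 t₁, t + h ∈ Ico 0 T := fun t ht ↦
    ⟨by linarith [ht.1], by linarith [ht.2]⟩
  have hlinear := heat_linear_le_of_le_left (p := -|y|) (q := 1) ht₁ (by linarith) hm
    (hu.continuousOn_increment hh le_rfl hht (by linarith) le_rfl)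
    (fun t ht x hx ↦ hu.increment_isSupersolutionAt_heat hf hh ht.1
      (htime' t (Ioc_subset_Icc_self ht)).2 ⟨by linarith [hx.1], hx.2⟩
      (hV x ⟨by linarith [hx.1], hx.2.le⟩))
    (fun x hx ↦ hu.increment_nonneg hh le_rfl (by linarith) ⟨by linarith [hx.1], hx.2⟩)
    (fun t ht ↦ by rw [hneg (htime t ht), hneg (htime' t ht)]; exact hle t ht)
    (fun t ht ↦ hu.increment_nonneg hh ht.1 (htime' t ht).2 (by norm_num))
    |x| ⟨by linarith [abs_nonneg x], abs_le.2 hx⟩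
  have ht₁' : t₁ ∈ Icc 0 t₁ := right_mem_Icc.2 ht₁.le
  simpa only [sub_neg_eq_add, sub_zero, habs (htime t₁ ht₁') hx, habs (htime' t₁ ht₁') hx]
    using hlinear

lemma IsMonotoneSolution.exists_mul_le_increment (hu : IsMonotoneSolution f V T u)
    (hf : IsConvexReaction f) (hV : ∀ x ∈ Icc (-1) 1, V x ∈ Icc 0 K)
    (hV_cont : ContinuousOn V (Icc (-1) 1)) (hu₀ : ContDiffOn ℝ 2 (u 0) (Ioo (-1) 1))
    (hgrow : ∃ t ∈ Ico 0 T, ∃ x ∈ Icc (-1) 1, u 0 x < u t x)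
    (heven : ∀ t ∈ Ico 0 T, ∀ x ∈ Icc (-1 : ℝ) 1, u t (-x) = u t x) :
    ∃ c > 0, ∃ t₀ ∈ Ioc 0 (T / 4), ∃ h₁ > 0, ∀ h ∈ Ioc 0 h₁,
      ∀ x ∈ Icc (-1) 1, c * h * (1 - |x|) ≤ u (t₀ + h) x - u t₀ x := by
  obtain ⟨α, β, c, hα, hαβ, hβ, hc, hrate⟩ := hu.exists_le_initialRate hf hV hV_cont hu₀ hgrow
  have hT : 0 < T := by
    obtain ⟨t, ht, -⟩ := hgrow
    exact ht.1.trans_lt ht.2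
  have : 0 < β - α := sub_pos.2 hαβ
  have ht₀ : 0 < min ((β - α) ^ 2 / 16) (T / 4) := by positivity
  have ht₀_le := min_le_left ((β - α) ^ 2 / 16) (T / 4)
  have ht₀T := min_le_right ((β - α) ^ 2 / 16) (T / 4)
  set t₀ := min ((β - α) ^ 2 / 16) (T / 4)
  have hh₁T : min 1 (T / 4) ≤ T / 4 := min_le_right _ _
  have hy : (α + β) / 2 ∈ Icc (-1) 1 := ⟨by linarith, by linarith⟩
  set y := (α + β) / 2
  refine ⟨c / 24 * (β - α) ^ 2 * exp (-((1 + |y|) ^ 2 / t₀)) * ((1 + |y|) / t₀), by positivity,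
    t₀, ⟨ht₀, ht₀T⟩, min 1 (T / 4), by positivity, fun h ⟨hh, hh₁⟩ x hx ↦ ?_⟩
  have hht : t₀ + h < T := by linarith
  refine le_of_eq_of_le (by ring) (hu.mul_one_sub_abs_le_increment hf (fun x hx ↦ (hV x hx).1)
    heven (m := c / 24 * (β - α) ^ 2 * h) (by positivity) hy hh.le ht₀ hht ?_ x hx)
  exact hu.le_increment_midpoint hf hV hα hβ hαβ.le hu₀ hc.le hrate hh.le
    (hh₁.trans (min_le_left _ _)) ht₀_le hht

end InitialRate

section FriedmanMcLeod

variable {f V : ℝ → ℝ} {T K B t t₀ t₁ h h₁ x α β c : ℝ} {u : ℝ → ℝ → ℝ}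

lemma le_mul_parabola_of_neg_lt_secondDeriv {g : ℝ → ℝ} {A : ℝ}
    (hg : ContinuousOn g (Icc α β)) (hα : g α ≤ 0) (hβ : g β ≤ 0)
    (hg₂ : ∀ x ∈ Ioo α β, ∃ g₂, HasSecondDerivAt g g₂ x ∧ -(2 * A) < g₂) :
    ∀ x ∈ Icc α β, g x ≤ A * ((x - α) * (β - x)) := by
  by_contra! ⟨x, hx, hlt⟩
  obtain ⟨y, hy, hmin⟩ := isCompact_Icc.exists_isMinOn (f := fun y ↦ A * ((y - α) * (β - y)) - g y)
    ⟨x, hx⟩ (ContinuousOn.sub (by fun_prop) hg)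
  have hneg : A * ((y - α) * (β - y)) - g y < 0 := (hmin hx).trans_lt (sub_neg.2 hlt)
  have hyα : α < y := hy.1.lt_of_ne' (by rintro rfl; norm_num at hneg; linarith)
  have hyβ : y < β := hy.2.lt_of_ne (by rintro rfl; norm_num at hneg; linarith)
  obtain ⟨g₂, hg₂, hlt₂⟩ := hg₂ y ⟨hyα, hyβ⟩
  have := (((hasSecondDerivAt_parabola α β y).const_mul A).sub hg₂).nonneg_of_isLocalMin
    (hmin.isLocalMin (Icc_mem_nhds hyα hyβ))
  linarith

lemma IsMonotoneSolution.exists_le_mul_one_sub_abs (hu : IsMonotoneSolution f V T u)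
    (hf : IsConvexReaction f) (hV : ∀ x ∈ Icc (-1) 1, V x ∈ Icc 0 K) (ht : t ∈ Ioo 0 T) :
    ∃ M ≥ 0, ∀ x ∈ Icc (-1) 1, u t x ≤ M * (1 - |x|) := by
  have ht' := Ioo_subset_Ico_self ht
  have hK : 0 ≤ K := (hV 0 (by norm_num)).1.trans (hV 0 (by norm_num)).2
  obtain ⟨B, hB⟩ := isCompact_Icc.bddAbove_image (hu.continuousOn_space ht')
  replace hB : ∀ x ∈ Icc (-1) 1, u t x ≤ B := fun x hx ↦ hB ⟨x, hx, rfl⟩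
  have hB₀ : 0 ≤ B := (hu.nonneg t ht' 0 (by norm_num)).trans (hB 0 (by norm_num))
  have hfB := mul_nonneg hK (hf.nonneg hB₀)
  refine ⟨K * f B + 1, by positivity, fun x hx ↦ ?_⟩
  have hparabola := le_mul_parabola_of_neg_lt_secondDeriv (A := (K * f B + 1) / 2)
    (hu.continuousOn_space ht') (hu.boundary t ht').1.le (hu.boundary t ht').2.le
    (fun x hx ↦ ⟨_, hasSecondDerivAt_of_contDiffAt (hu.regular t ht x hx).2, ?_⟩) x hx
  · have habs : (x - -1) * (1 - x) ≤ 2 * (1 - |x|) := by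
      nlinarith [sq_abs x, sq_nonneg (1 - |x|)]
    have := mul_le_mul_of_nonneg_left habs (by positivity : 0 ≤ (K * f B + 1) / 2)
    linarith
  · have hx' := Ioo_subset_Icc_self hx
    have hux := hu.nonneg t ht' x hx'
    have hreact : V x * f (u t x) ≤ K * f B := mul_le_mul (hV x hx').2
      (hf.monotoneOn hux hB₀ (hB x hx')) (hf.nonneg hux) hK
    have := hu.deriv_nonneg t ht x hx
    rw [hu.deriv_eq t ht x hx] at this
    linarith

lemma IsMonotoneSolution.exists_mul_reaction_le_mul_one_sub_abs
    (hu : IsMonotoneSolution f V T u) (hf : IsConvexReaction f)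
    (hV : ∀ x ∈ Icc (-1) 1, V x ∈ Icc 0 K) (hc : 0 < c) (ht : t ∈ Ioo 0 T) :
    ∃ δ > 0, ∀ x ∈ Icc (-1) 1, δ * f (u t x) ≤ c * (1 - |x|) := by
  obtain ⟨M, hM, hle⟩ := hu.exists_le_mul_one_sub_abs hf hV ht
  have hfM : 0 ≤ deriv f M := hf.deriv_nonneg hM
  have hδ : 0 < c / (deriv f M * M + 1) := by positivity
  refine ⟨_, hδ, fun x hx ↦ ?_⟩
  have hx₀ : 0 ≤ 1 - |x| := sub_nonneg.2 (abs_le.2 hx)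
  have hM_le : M * (1 - |x|) ≤ M := mul_le_of_le_one_right hM (by linarith [abs_nonneg x])
  have hreact : f (u t x) ≤ (deriv f M * M + 1) * (1 - |x|) :=
    calc f (u t x) ≤ deriv f M * u t x :=
          hf.le_deriv_mul (hu.nonneg t (Ioo_subset_Ico_self ht) x hx) ((hle x hx).trans hM_le)
      _ ≤ deriv f M * (M * (1 - |x|)) := mul_le_mul_of_nonneg_left (hle x hx) hfM
      _ ≤ (deriv f M * M + 1) * (1 - |x|) := by linarith
  refine (mul_le_mul_of_nonneg_left hreact hδ.le).trans_eq ?_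
  field_simp

lemma IsClassicalSolution.friedmanMcLeod_touching (hu : IsClassicalSolution f V T u)
    (hf : IsConvexReaction f) (hV : V x ∈ Icc 0 K) {ε : ℝ} (hε : 0 ≤ ε) (ht : 0 < t)
    (hh : 0 ≤ h) (hth : t + h < T) (hx : x ∈ Ioo (-1) 1) (hB : u t x ≤ B)
    (hneg : u (t + h) x - u t x - ε * f (u t x) < 0)
    (hmin : IsLocalMin (fun y ↦ u (t + h) y - u t y - ε * f (u t y)) x) :
    ∃ D', HasDerivAt (fun s ↦ u (s + h) x - u s x - ε * f (u s x)) D' t ∧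
      K * deriv f B * (u (t + h) x - u t x - ε * f (u t x)) ≤ D' := by
  have ht' : t ∈ Ico 0 T := ⟨ht.le, by linarith⟩
  have hth' : t + h ∈ Ico 0 T := ⟨by linarith, hth⟩
  have hx' := Ioo_subset_Icc_self hx
  have hw := hu.nonneg t ht' x hx'
  have hv := hu.nonneg (t + h) hth' x hx'
  obtain ⟨vxx, vt, hvxx, hvt, hv_le⟩ := hu.isSupersolutionAt (t := t + h) ⟨by linarith, hth⟩ hx
  obtain ⟨wxx, wt, hwxx, hwt, hw_le⟩ := hu.isSubsolutionAt (t := t) ⟨ht, ht'.2⟩ hx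
  set k := deriv f (u t x)
  have hk : 0 ≤ k := hf.deriv_nonneg hw
  -- As `f` lies above its tangent at `u t x`, replacing it by the tangent keeps the minimum at `x`.
  have hxx : 0 ≤ vxx - wxx - ε * (k * wxx) := by
    refine ((hvxx.sub hwxx).sub ((hwxx.const_mul k).const_mul ε)).nonneg_of_isLocalMin ?_
    filter_upwards [hmin, isOpen_Ioo.mem_nhds hx] with y hy hyI
    have := mul_le_mul_of_nonneg_left
      (hf.add_deriv_mul_sub_le hw (hu.nonneg t ht' y (Ioo_subset_Icc_self hyI))) hε
    linarith
  have hfw : HasDerivAt (fun s ↦ f (u s x)) (k * wt) t :=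
    (hf.differentiableAt _ hw).hasDerivAt.comp t hwt
  refine ⟨_, ((hvt.comp_add_const t h).sub hwt).sub (hfw.const_mul ε), ?_⟩
  have htangent := mul_le_mul_of_nonneg_left (hf.add_deriv_mul_sub_le hw hv) hV.1
  have hrate : (1 + ε * k) * wt ≤ (1 + ε * k) * (wxx + V x * f (u t x)) :=
    mul_le_mul_of_nonneg_left hw_le (by positivity)
  have hVk : V x * k ≤ K * deriv f B :=
    mul_le_mul hV.2 (hf.deriv_le_deriv hw hB) hk (hV.1.trans hV.2)
  have := mul_le_mul_of_nonpos_right hVk hneg.le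
  linarith

lemma IsMonotoneSolution.mul_reaction_le_increment (hu : IsMonotoneSolution f V T u)
    (hf : IsConvexReaction f) (hV : ∀ x ∈ Icc (-1) 1, V x ∈ Icc 0 K) {ε : ℝ} (hε : 0 ≤ ε)
    (hh : 0 ≤ h) (ht₀ : 0 ≤ t₀) (hth : t₁ + h < T)
    (hinit : ∀ x ∈ Icc (-1) 1, ε * f (u t₀ x) ≤ u (t₀ + h) x - u t₀ x) :
    ∀ t ∈ Icc t₀ t₁, ∀ x ∈ Icc (-1) 1, ε * f (u t x) ≤ u (t + h) x - u t x := by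
  have htime : ∀ t ∈ Icc t₀ t₁, t ∈ Ico 0 T := fun t ht ↦ ⟨ht₀.trans ht.1, by linarith [ht.2]⟩
  have htime' : ∀ t ∈ Icc t₀ t₁, t + h ∈ Ico 0 T := fun t ht ↦
    ⟨by linarith [ht.1], by linarith [ht.2]⟩
  have hcont : ContinuousOn (fun q : ℝ × ℝ ↦ u q.1 q.2) (Icc t₀ t₁ ×ˢ Icc (-1) 1) :=
    hu.continuousOn.mono (prod_mono htime subset_rfl)
  obtain ⟨B, hB⟩ := (isCompact_Icc.prod isCompact_Icc).bddAbove_image hcont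
  suffices ∀ t ∈ Icc t₀ t₁, ∀ x ∈ Icc (-1) 1, 0 ≤ u (t + h) x - u t x - ε * f (u t x) from
    fun t ht x hx ↦ sub_nonneg.1 (this t ht x hx)
  refine nonneg_of_mul_le_deriv_at_neg_min (K := K * deriv f B)
    ((hu.continuousOn_increment hh ht₀ hth le_rfl le_rfl).sub (continuousOn_const.mul
      (hf.continuousOn.comp hcont fun q hq ↦ hu.nonneg _ (htime _ hq.1) _ hq.2)))
    (fun x hx ↦ sub_nonneg.2 (hinit x hx)) (fun t ht ↦ ?_) (fun t ht ↦ ?_)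
    fun t ht x hx hneg hmin ↦ ?_
  · simp [hu.boundary t (htime t ht), hu.boundary _ (htime' t ht), hf.map_zero]
  · simp [hu.boundary t (htime t ht), hu.boundary _ (htime' t ht), hf.map_zero]
  · have ht' := Ioc_subset_Icc_self ht
    have hx' := Ioo_subset_Icc_self hx
    exact hu.friedmanMcLeod_touching hf (hV x hx') hε (ht₀.trans_lt ht.1) hh (htime' t ht').2 hx
      (hB ⟨(t, x), ⟨ht', hx'⟩, rfl⟩) hneg hmin

lemma le_deriv_of_forall_mul_le_increment {g : ℝ → ℝ} {r : ℝ} (hg : DifferentiableAt ℝ g t)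
    (hh₁ : 0 < h₁) (hle : ∀ h ∈ Ioo 0 h₁, h * r ≤ g (t + h) - g t) : r ≤ deriv g t := by
  refine ge_of_tendsto hg.hasDerivAt.tendsto_slope_zero_right ?_
  filter_upwards [Ioo_mem_nhdsGT hh₁] with h hh
  rw [smul_eq_mul, le_inv_mul_iff₀ hh.1]
  exact hle h hh

theorem IsMonotoneSolution.exists_mul_reaction_le_deriv (hu : IsMonotoneSolution f V T u)
    (hf : IsConvexReaction f) (hV : ∀ x ∈ Icc (-1) 1, V x ∈ Icc 0 K)
    (hV_cont : ContinuousOn V (Icc (-1) 1)) (hu₀ : ContDiffOn ℝ 2 (u 0) (Ioo (-1) 1))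
    (hgrow : ∃ t ∈ Ico 0 T, ∃ x ∈ Icc (-1) 1, u 0 x < u t x)
    (heven : ∀ t ∈ Ico 0 T, ∀ x ∈ Icc (-1 : ℝ) 1, u t (-x) = u t x) :
    ∃ δ > 0, ∀ t ∈ Ioo (T / 4) T, ∀ x ∈ Ioo (-1) 1, δ * f (u t x) ≤ deriv (u · x) t := by
  obtain ⟨c, hc, t₀, ⟨ht₀, ht₀T⟩, h₁, hh₁, hinc⟩ :=
    hu.exists_mul_le_increment hf hV hV_cont hu₀ hgrow heven
  obtain ⟨δ, hδ, hreact⟩ :=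
    hu.exists_mul_reaction_le_mul_one_sub_abs hf hV hc (t := t₀) ⟨ht₀, by linarith⟩
  refine ⟨δ, hδ, fun t ht x hx ↦ ?_⟩
  refine le_deriv_of_forall_mul_le_increment (hu.regular t ⟨by linarith [ht.1], ht.2⟩ x hx).1
    (lt_min hh₁ (sub_pos.2 ht.2)) fun h ⟨hh, hh_lt⟩ ↦ ?_
  have hh₁' : h ≤ h₁ := hh_lt.le.trans (min_le_left _ _)
  have hhT : h < T - t := hh_lt.trans_le (min_le_right _ _)
  rw [← mul_assoc]
  refine hu.mul_reaction_le_increment hf hV (by positivity) hh.le ht₀.le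
    (by linarith : t + h < T) (fun x hx ↦ ?_) t ⟨by linarith [ht.1], le_rfl⟩ x
    (Ioo_subset_Icc_self hx)
  calc h * δ * f (u t₀ x) = h * (δ * f (u t₀ x)) := by ring
    _ ≤ h * (c * (1 - |x|)) := mul_le_mul_of_nonneg_left (hreact x hx) hh.le
    _ = c * h * (1 - |x|) := by ring
    _ ≤ u (t₀ + h) x - u t₀ x := hinc h ⟨hh, hh₁'⟩ x hx

end FriedmanMcLeod

section LogarithmicODE

variable {a k δ m₀ t₀ T t : ℝ} {m : ℝ → ℝ}

lemma log_one_add_pos {y : ℝ} (hy : 0 < y) : 0 < log (1 + y) := Real.log_pos (by linarith)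

lemma hasDerivAt_log_one_add_rpow {m' : ℝ} (hm : 0 < m t) (hd : HasDerivAt m m' t) :
    HasDerivAt (fun s ↦ log (1 + m s) ^ (1 - a))
      (-(a - 1) * (m' / ((1 + m t) * log (1 + m t) ^ a))) t := by
  have hlog := log_one_add_pos hm
  have hlog_deriv := (hd.const_add 1).log (by linarith : 1 + m t ≠ 0)
  refine (hlog_deriv.rpow_const (p := 1 - a) (Or.inl hlog.ne')).congr_deriv ?_
  rw [show 1 - a - 1 = -a by ring, Real.rpow_neg hlog.le]
  field_simp
  ring

lemma logReaction_div {y : ℝ} (hy : 0 < y) :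
    logReaction a y / ((1 + y) * log (1 + y) ^ a) = y / (1 + y) := by
  have : log (1 + y) ^ a ≠ 0 := (Real.rpow_pos_of_pos (log_one_add_pos hy) a).ne'
  rw [logReaction, mul_div_mul_right _ _ this]

lemma le_rpow_one_sub_iff (ha : 1 < a) {y z : ℝ} (hy : 0 < y) (hz : 0 < z) :
    z ≤ y ^ (1 - a) ↔ y ≤ z ^ (-(1 / (a - 1))) := by
  rw [← Real.le_rpow_inv_iff_of_neg hy hz (by linarith : 1 - a < 0), ← neg_sub a 1, inv_neg,
    one_div]

lemma rpow_one_sub_le_iff (ha : 1 < a) {y z : ℝ} (hy : 0 < y) (hz : 0 < z) :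
    y ^ (1 - a) ≤ z ↔ z ^ (-(1 / (a - 1))) ≤ y := by
  rw [← Real.rpow_inv_le_iff_of_neg hz hy (by linarith : 1 - a < 0), ← neg_sub a 1, inv_neg,
    one_div]

lemma deriv_log_one_add_rpow_le (ha : 1 ≤ a) (hδ : 0 ≤ δ) (hm₀ : 0 < m₀) (hm : m₀ ≤ m t)
    (hd : DifferentiableAt ℝ m t) (hle : δ * logReaction a (m t) ≤ deriv m t) :
    deriv (fun s ↦ log (1 + m s) ^ (1 - a)) t ≤ -((a - 1) * (δ * (m₀ / (1 + m₀)))) := by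
  have hmt : 0 < m t := hm₀.trans_le hm
  have hlog := log_one_add_pos hmt
  have hfrac : m₀ / (1 + m₀) ≤ m t / (1 + m t) := by
    rw [div_le_div_iff₀ (by linarith) (by linarith)]
    linarith
  rw [(hasDerivAt_log_one_add_rpow hmt hd.hasDerivAt).deriv, neg_mul, neg_le_neg_iff]
  refine mul_le_mul_of_nonneg_left ?_ (sub_nonneg.2 ha)
  calc δ * (m₀ / (1 + m₀)) ≤ δ * (m t / (1 + m t)) := mul_le_mul_of_nonneg_left hfrac hδ
    _ = δ * logReaction a (m t) / ((1 + m t) * log (1 + m t) ^ a) := by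
      rw [mul_div_assoc, logReaction_div hmt]
    _ ≤ deriv m t / ((1 + m t) * log (1 + m t) ^ a) :=
      div_le_div_of_nonneg_right hle (by positivity)

lemma le_deriv_log_one_add_rpow (ha : 1 ≤ a) (hk : 0 ≤ k) (hm : 0 < m t)
    (hd : DifferentiableAt ℝ m t) (hle : deriv m t ≤ k * logReaction a (m t)) :
    -((a - 1) * k) ≤ deriv (fun s ↦ log (1 + m s) ^ (1 - a)) t := by
  have hlog := log_one_add_pos hm
  rw [(hasDerivAt_log_one_add_rpow hm hd.hasDerivAt).deriv, neg_mul, neg_le_neg_iff]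
  refine mul_le_mul_of_nonneg_left ?_ (sub_nonneg.2 ha)
  calc deriv m t / ((1 + m t) * log (1 + m t) ^ a)
      ≤ k * logReaction a (m t) / ((1 + m t) * log (1 + m t) ^ a) :=
        div_le_div_of_nonneg_right hle (by positivity)
    _ = k * (m t / (1 + m t)) := by rw [mul_div_assoc, logReaction_div hm]
    _ ≤ k := mul_le_of_le_one_right hk (div_le_one_of_le₀ (by linarith) (by linarith))

lemma differentiableOn_log_one_add_rpow (hm : ∀ t ∈ Ioo t₀ T, 0 < m t)
    (hd : ∀ t ∈ Ioo t₀ T, DifferentiableAt ℝ m t) :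
    DifferentiableOn ℝ (fun s ↦ log (1 + m s) ^ (1 - a)) (Ioo t₀ T) := fun t ht ↦
  (hasDerivAt_log_one_add_rpow (hm t ht) (hd t ht).hasDerivAt).differentiableAt
    |>.differentiableWithinAt

lemma mul_sub_le_log_one_add_rpow (ha : 1 ≤ a) (hδ : 0 ≤ δ) (hm₀ : 0 < m₀)
    (hm : ∀ t ∈ Ioo t₀ T, m₀ ≤ m t) (hd : ∀ t ∈ Ioo t₀ T, DifferentiableAt ℝ m t)
    (hle : ∀ t ∈ Ioo t₀ T, δ * logReaction a (m t) ≤ deriv m t) (ht : t ∈ Ioo t₀ T) :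
    (a - 1) * (δ * (m₀ / (1 + m₀))) * (T - t) ≤ log (1 + m t) ^ (1 - a) := by
  have hpos : ∀ s ∈ Ioo t₀ T, 0 < m s := fun s hs ↦ hm₀.trans_le (hm s hs)
  have hdiff := differentiableOn_log_one_add_rpow (a := a) hpos hd
  have hlim : Tendsto (fun s ↦ (a - 1) * (δ * (m₀ / (1 + m₀))) * (s - t)) (𝓝[<] T)
      (𝓝 ((a - 1) * (δ * (m₀ / (1 + m₀))) * (T - t))) :=
    (Continuous.tendsto (by fun_prop) T).mono_left nhdsWithin_le_nhds
  refine le_of_tendsto hlim ?_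
  filter_upwards [Ioo_mem_nhdsLT ht.2] with s hs
  have hs' : s ∈ Ioo t₀ T := ⟨ht.1.trans hs.1, hs.2⟩
  have := (convex_Ioo t₀ T).image_sub_le_mul_sub_of_deriv_le hdiff.continuousOn
    (hdiff.mono interior_subset) (fun r hr ↦ deriv_log_one_add_rpow_le ha hδ hm₀
      (hm r (interior_subset hr)) (hd r (interior_subset hr)) (hle r (interior_subset hr)))
    t ht s hs' hs.1.le
  have := Real.rpow_nonneg (log_one_add_pos (hpos s hs')).le (1 - a)
  linarith

lemma log_one_add_rpow_le_mul_sub (ha : 1 < a) (hk : 0 ≤ k) (hm : ∀ t ∈ Ioo t₀ T, 0 < m t)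
    (hd : ∀ t ∈ Ioo t₀ T, DifferentiableAt ℝ m t)
    (hle : ∀ t ∈ Ioo t₀ T, deriv m t ≤ k * logReaction a (m t))
    (hblow : ∀ M, ∀ t < T, ∃ s ∈ Ioo t T, M < m s) (ht : t ∈ Ioo t₀ T) :
    log (1 + m t) ^ (1 - a) ≤ (a - 1) * k * (T - t) := by
  have hdiff := differentiableOn_log_one_add_rpow (a := a) hm hd
  refine le_of_forall_pos_le_add fun ε hε ↦ ?_
  obtain ⟨s, hs, hlarge⟩ := hblow (exp (ε ^ (-(1 / (a - 1)))) - 1) t ht.2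
  have hs' : s ∈ Ioo t₀ T := ⟨ht.1.trans hs.1, hs.2⟩
  have hms := hm s hs'
  have hsmall : log (1 + m s) ^ (1 - a) ≤ ε := by
    rw [rpow_one_sub_le_iff ha (log_one_add_pos hms) hε, Real.le_log_iff_exp_le (by linarith)]
    linarith
  have := (convex_Ioo t₀ T).mul_sub_le_image_sub_of_le_deriv hdiff.continuousOn
    (hdiff.mono interior_subset) (fun r hr ↦ le_deriv_log_one_add_rpow ha.le hk
      (hm r (interior_subset hr)) (hd r (interior_subset hr)) (hle r (interior_subset hr)))
    t ht s hs' hs.1.le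
  have : (a - 1) * k * (s - t) ≤ (a - 1) * k * (T - t) :=
    mul_le_mul_of_nonneg_left (by linarith [hs.2]) (mul_nonneg (by linarith) hk)
  linarith

theorem exists_le_exp_of_mul_logReaction_le_deriv (ha : 1 < a) (hδ : 0 < δ) (hm₀ : 0 < m₀)
    (hm : ∀ t ∈ Ioo t₀ T, m₀ ≤ m t) (hd : ∀ t ∈ Ioo t₀ T, DifferentiableAt ℝ m t)
    (hle : ∀ t ∈ Ioo t₀ T, δ * logReaction a (m t) ≤ deriv m t) :
    ∃ C > 0, ∀ t ∈ Ioo t₀ T, m t ≤ exp (C * (T - t) ^ (-(1 / (a - 1)))) := by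
  have : 0 < a - 1 := sub_pos.2 ha
  have hk : 0 < (a - 1) * (δ * (m₀ / (1 + m₀))) := by positivity
  refine ⟨((a - 1) * (δ * (m₀ / (1 + m₀)))) ^ (-(1 / (a - 1))), by positivity, fun t ht ↦ ?_⟩
  have hτ : 0 < T - t := sub_pos.2 ht.2
  have hmt : 0 < m t := hm₀.trans_le (hm t ht)
  have hlog := mul_sub_le_log_one_add_rpow ha.le hδ.le hm₀ hm hd hle ht
  rw [le_rpow_one_sub_iff ha (log_one_add_pos hmt) (mul_pos hk hτ), Real.mul_rpow hk.le hτ.le,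
    Real.log_le_iff_le_exp (by linarith)] at hlog
  linarith

theorem exists_exp_sub_one_le_of_deriv_le_mul_logReaction (ha : 1 < a) (hk : 0 < k)
    (hm : ∀ t ∈ Ioo t₀ T, 0 < m t) (hd : ∀ t ∈ Ioo t₀ T, DifferentiableAt ℝ m t)
    (hle : ∀ t ∈ Ioo t₀ T, deriv m t ≤ k * logReaction a (m t))
    (hblow : ∀ M, ∀ t < T, ∃ s ∈ Ioo t T, M < m s) :
    ∃ C > 0, ∀ t ∈ Ioo t₀ T, exp (C * (T - t) ^ (-(1 / (a - 1)))) - 1 ≤ m t := by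
  have hk' : 0 < (a - 1) * k := mul_pos (sub_pos.2 ha) hk
  refine ⟨((a - 1) * k) ^ (-(1 / (a - 1))), by positivity, fun t ht ↦ ?_⟩
  have hτ : 0 < T - t := sub_pos.2 ht.2
  have hmt : 0 < m t := hm t ht
  have hlog := log_one_add_rpow_le_mul_sub ha hk.le hm hd hle hblow ht
  rw [rpow_one_sub_le_iff ha (log_one_add_pos hmt) (mul_pos hk' hτ), Real.mul_rpow hk'.le hτ.le,
    Real.le_log_iff_exp_le (by linarith)] at hlog
  linarith

end LogarithmicODE

section Absorption

variable {p c s₀ τ₀ : ℝ}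

lemma exists_inv_le_mul_rpow_neg_add (hp : 1 < p) (hc : 0 < c) :
    ∃ K, ∀ τ > 0, τ⁻¹ ≤ c * τ ^ (-p) + K := by
  have hp₀ : 0 < p - 1 := sub_pos.2 hp
  refine ⟨(c ^ (p - 1)⁻¹)⁻¹, fun τ hτ ↦ ?_⟩
  have hK : 0 < (c ^ (p - 1)⁻¹)⁻¹ := by positivity
  have hτp : 0 < τ ^ (-p) := by positivity
  rcases le_total τ (c ^ (p - 1)⁻¹) with h | h
  · rw [Real.le_rpow_inv_iff_of_pos hτ.le hc.le hp₀] at h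
    calc τ⁻¹ = τ ^ (p - 1) * τ ^ (-p) := by
          rw [← Real.rpow_add hτ, show p - 1 + -p = -1 by ring, Real.rpow_neg_one]
      _ ≤ c * τ ^ (-p) := mul_le_mul_of_nonneg_right h hτp.le
      _ ≤ c * τ ^ (-p) + (c ^ (p - 1)⁻¹)⁻¹ := by linarith
  · have := inv_anti₀ (by positivity) h
    linarith [mul_pos hc hτp]

lemma exists_mul_exp_le_exp_sub_one (hs₀ : 0 < s₀) :
    ∃ κ > 0, ∀ s ≥ s₀, κ * exp s ≤ exp s - 1 := by
  refine ⟨1 - exp (-s₀), by simpa using hs₀, fun s hs ↦ ?_⟩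
  have : 1 ≤ exp (-s₀) * exp s := by
    rw [← Real.exp_add]
    exact Real.one_le_exp (by linarith)
  linarith

lemma exists_mul_exp_rpow_neg_le (hp : 1 < p) (hc : 0 < c) (hτ₀ : 0 < τ₀) :
    ∃ C > 0, ∀ τ ∈ Ioc 0 τ₀,
      C * exp (C * τ ^ (-p)) ≤ (exp (c * τ ^ (-p)) - 1) * exp (-τ⁻¹) * τ⁻¹ := by
  obtain ⟨K, hK⟩ := exists_inv_le_mul_rpow_neg_add hp (half_pos hc)
  obtain ⟨κ, hκ, hexp⟩ := exists_mul_exp_le_exp_sub_one (by positivity : 0 < c * τ₀ ^ (-p))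
  have hC : 0 < min (κ * exp (-K) * τ₀⁻¹) (c / 2) := by positivity
  refine ⟨_, hC, fun τ ⟨hτ, hle⟩ ↦ ?_⟩
  have hs₀ : τ₀ ^ (-p) ≤ τ ^ (-p) := Real.rpow_le_rpow_of_nonpos hτ hle (by linarith)
  have : 0 < τ ^ (-p) := by positivity
  calc min (κ * exp (-K) * τ₀⁻¹) (c / 2) * exp (min (κ * exp (-K) * τ₀⁻¹) (c / 2) * τ ^ (-p))
      ≤ κ * exp (-K) * τ₀⁻¹ * exp (c / 2 * τ ^ (-p)) := by
        gcongr <;> simp only [min_le_left, min_le_right]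
    _ = κ * exp (c * τ ^ (-p)) * exp (-(c / 2 * τ ^ (-p) + K)) * τ₀⁻¹ := by
        rw [show c / 2 * τ ^ (-p) = c * τ ^ (-p) + -(c / 2 * τ ^ (-p) + K) + K by ring,
          Real.exp_add, Real.exp_add, Real.exp_neg K]
        field_simp
        ring_nf
    _ ≤ (exp (c * τ ^ (-p)) - 1) * exp (-τ⁻¹) * τ⁻¹ := by
        have hbound := hexp _ (mul_le_mul_of_nonneg_left hs₀ hc.le)
        have : 0 ≤ exp (c * τ ^ (-p)) - 1 := le_trans (by positivity) hbound
        gcongr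
        exact hK τ hτ

end Absorption

section BlowupRate

variable {f V : ℝ → ℝ} {T t t₀ t₁ x a m K : ℝ} {u : ℝ → ℝ → ℝ}

lemma IsClassicalSolution.deriv_le_of_isLocalMax (hu : IsClassicalSolution f V T u)
    (ht : t ∈ Ioo 0 T) (hx : x ∈ Ioo (-1) 1) (hmax : IsLocalMax (u t) x) :
    deriv (u · x) t ≤ V x * f (u t x) := by
  have := ((hasSecondDerivAt_of_contDiffAt (hu.regular t ht x hx).2).const_mul
    (-1)).nonneg_of_isLocalMin (by simpa using hmax.neg)
  rw [hu.deriv_eq t ht x hx]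
  linarith

namespace IsMonotoneSolution

lemma exists_origin_le_exp (hu : IsMonotoneSolution (logReaction a) V T u) (ha : 1 < a)
    (hV : ∀ x ∈ Icc (-1) 1, V x ∈ Icc 0 K) (hV_cont : ContinuousOn V (Icc (-1) 1))
    (hu₀ : ContDiffOn ℝ 2 (u 0) (Ioo (-1) 1)) (hpos : 0 < u 0 0)
    (hgrow : ∃ t ∈ Ico 0 T, ∃ x ∈ Icc (-1) 1, u 0 x < u t x)
    (heven : ∀ t ∈ Ico 0 T, ∀ x ∈ Icc (-1 : ℝ) 1, u t (-x) = u t x) :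
    ∃ C > 0, ∀ t ∈ Ioo (T / 4) T, u t 0 ≤ exp (C * (T - t) ^ (-(1 / (a - 1)))) := by
  obtain ⟨δ, hδ, hrate⟩ := hu.exists_mul_reaction_le_deriv (isConvexReaction_logReaction ha.le)
    hV hV_cont hu₀ hgrow heven
  have hT : 0 < T := by
    obtain ⟨t, ht, -⟩ := hgrow
    exact ht.1.trans_lt ht.2
  have htime : ∀ t ∈ Ioo (T / 4) T, t ∈ Ioo 0 T := fun t ht ↦ ⟨by linarith [ht.1], ht.2⟩
  exact exists_le_exp_of_mul_logReaction_le_deriv (m := (u · 0)) ha hδ hpos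
    (fun t ht ↦ hu.monotoneOn (by norm_num) ⟨le_rfl, hT⟩ (Ioo_subset_Ico_self (htime t ht))
      (htime t ht).1.le)
    (fun t ht ↦ (hu.regular t (htime t ht) 0 (by norm_num)).1)
    (fun t ht ↦ hrate t ht 0 (by norm_num))

lemma exists_exp_sub_one_le_origin (hu : IsMonotoneSolution (logReaction a) V T u) (ha : 1 < a)
    (hV₀ : 0 < V 0) (hpos : 0 < u 0 0)
    (hmax : ∀ t ∈ Ico 0 T, ∀ x ∈ Icc (-1) 1, u t x ≤ u t 0)
    (hblow : ∀ M, ∀ t < T, ∃ s ∈ Ioo t T, M < u s 0) :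
    ∃ c > 0, ∀ t ∈ Ioo 0 T, exp (c * (T - t) ^ (-(1 / (a - 1)))) - 1 ≤ u t 0 := by
  refine exists_exp_sub_one_le_of_deriv_le_mul_logReaction (m := (u · 0)) ha hV₀
    (fun t ht ↦ hpos.trans_le (hu.monotoneOn (by norm_num) ⟨le_rfl, ht.1.trans ht.2⟩
      (Ioo_subset_Ico_self ht) ht.1.le))
    (fun t ht ↦ (hu.regular t ht 0 (by norm_num)).1) (fun t ht ↦ ?_) hblow
  refine hu.deriv_le_of_isLocalMax ht (by norm_num) ?_
  filter_upwards [Icc_mem_nhds (by norm_num : (-1 : ℝ) < 0) one_pos] with x hx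
  exact hmax t (Ioo_subset_Ico_self ht) x hx

lemma mul_one_sub_abs_le (hu : IsMonotoneSolution f V T u) (hf : IsConvexReaction f)
    (hV : ∀ x ∈ Icc (-1) 1, 0 ≤ V x)
    (heven : ∀ t ∈ Ico 0 T, ∀ x ∈ Icc (-1 : ℝ) 1, u t (-x) = u t x)
    (ht₀ : 0 ≤ t₀) (ht : t₀ < t₁) (ht₁ : t₁ < T) (hm : 0 ≤ m) (hle : m ≤ u t₀ 0) :
    ∀ x ∈ Icc (-1) 1, m * exp (-(t₁ - t₀)⁻¹) * (t₁ - t₀)⁻¹ * (1 - |x|) ≤ u t₁ x := by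
  intro x hx
  have htime : Icc t₀ t₁ ⊆ Ico 0 T := Icc_subset_Ico ht₀ ht₁
  have hspace : Icc (0 : ℝ) 1 ⊆ Icc (-1) 1 := Icc_subset_Icc_left (by norm_num)
  have hlinear := heat_linear_le_of_le_left ht zero_le_one hm
    (hu.continuousOn.mono (prod_mono htime hspace))
    (fun t ht x hx ↦ hu.isSupersolutionAt_heat hf
      ⟨ht₀.trans_lt ht.1, (htime (Ioc_subset_Icc_self ht)).2⟩ ⟨by linarith [hx.1], hx.2⟩
      (hV x (hspace (Ioo_subset_Icc_self hx))))
    (fun x hx ↦ hu.nonneg t₀ (htime ⟨le_rfl, ht.le⟩) x (hspace hx))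
    (fun t ht ↦ hle.trans (hu.monotoneOn (by norm_num) ⟨ht₀, by linarith⟩ (htime ht) ht.1))
    (fun t ht ↦ hu.nonneg t (htime ht) 1 (by norm_num)) |x| ⟨abs_nonneg x, abs_le.2 hx⟩
  rw [apply_abs_eq_of_even (heven t₁ ⟨by linarith, ht₁⟩) hx] at hlinear
  simpa only [sub_zero, one_pow, one_div] using hlinear

lemma exists_mul_one_sub_abs_mul_exp_le (hu : IsMonotoneSolution (logReaction a) V T u)
    (ha₁ : 1 < a) (ha₂ : a < 2) (hT : 0 < T) (hV : ∀ x ∈ Icc (-1) 1, 0 ≤ V x)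
    (heven : ∀ t ∈ Ico 0 T, ∀ x ∈ Icc (-1 : ℝ) 1, u t (-x) = u t x) {c : ℝ} (hc : 0 < c)
    (horigin : ∀ t ∈ Ioo 0 T, exp (c * (T - t) ^ (-(1 / (a - 1)))) - 1 ≤ u t 0) :
    ∃ C > 0, ∀ t ∈ Ioo (T / 2) T, ∀ x ∈ Icc (-1) 1,
      C * (1 - |x|) * exp (C * (T - t) ^ (-(1 / (a - 1)))) ≤ u t x := by
  have ha₀ : 0 < a - 1 := sub_pos.2 ha₁
  have hp : 1 < 1 / (a - 1) := by rw [lt_div_iff₀ ha₀]; linarith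
  set p := 1 / (a - 1)
  obtain ⟨C, hC, habsorb⟩ := exists_mul_exp_rpow_neg_le (c := c * 2 ^ (-p)) hp (by positivity)
    (half_pos hT)
  refine ⟨C, hC, fun t ht x hx ↦ ?_⟩
  have hτ : 0 < T - t := sub_pos.2 ht.2
  -- The bound at the origin is used at time `t - (T - t)`, leaving a time `T - t` to reach `x`.
  have hm : exp (c * 2 ^ (-p) * (T - t) ^ (-p)) - 1 ≤ u (t - (T - t)) 0 := by
    have := horigin (t - (T - t)) ⟨by linarith [ht.1], by linarith⟩
    rwa [show T - (t - (T - t)) = 2 * (T - t) by ring, Real.mul_rpow zero_le_two hτ.le,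
      ← mul_assoc] at this
  have hspread := hu.mul_one_sub_abs_le (isConvexReaction_logReaction ha₁.le) hV heven
    (by linarith [ht.1]) (sub_lt_self t hτ) ht.2
    (sub_nonneg.2 (Real.one_le_exp (by positivity))) hm x hx
  rw [sub_sub_cancel] at hspread
  have := mul_le_mul_of_nonneg_right (habsorb (T - t) ⟨hτ, by linarith [ht.1]⟩)
    (sub_nonneg.2 (abs_le.2 hx) : 0 ≤ 1 - |x|)
  linarith

theorem exists_exp_rate_bounds (hu : IsMonotoneSolution (logReaction a) V T u) (ha₁ : 1 < a)
    (ha₂ : a < 2) (hT : 0 < T) (hV : ∀ x ∈ Icc (-1) 1, 0 ≤ V x)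
    (hV_cont : ContinuousOn V (Icc (-1) 1)) (hVp : IsPeaked V) (hV₀ : 0 < V 0)
    (hu₀ : ContDiffOn ℝ 2 (u 0) (Ioo (-1) 1)) (hu₀p : IsPeaked (u 0)) (hpos : 0 < u 0 0)
    (hblow : ∀ M, ∀ t ∈ Ico 0 T, ∃ s ∈ Ioo t T, ∃ x ∈ Icc (-1) 1, M < u s x) :
    ∃ C₁ > 0, ∃ C₂ ≥ C₁, ∀ t ∈ Ioo (T / 2) T, ∀ x ∈ Icc (-1) 1,
      C₁ * (1 - |x|) * exp (C₁ * (T - t) ^ (-(1 / (a - 1)))) ≤ u t x ∧ u t x ≤ u t 0 ∧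
        u t 0 ≤ exp (C₂ * (T - t) ^ (-(1 / (a - 1)))) := by
  have hf := isConvexReaction_logReaction ha₁.le
  have hV' : ∀ x ∈ Icc (-1) 1, V x ∈ Icc 0 (V 0) := fun x hx ↦ ⟨hV x hx, hVp.le_zero hx⟩
  have heven : ∀ t ∈ Ico 0 T, ∀ x ∈ Icc (-1 : ℝ) 1, u t (-x) = u t x := fun t ht ↦
    hu.even hf hV' hVp.even hu₀p.even ht
  have hmax : ∀ t ∈ Ico 0 T, ∀ x ∈ Icc (-1) 1, u t x ≤ u t 0 := fun t ht ↦
    hu.le_origin hf hV' hVp hu₀p ht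
  have hblow₀ : ∀ M, ∀ t < T, ∃ s ∈ Ioo t T, M < u s 0 := by
    intro M t ht
    obtain ⟨s, ⟨hs, hsT⟩, x, hx, hlt⟩ := hblow M (max t 0) ⟨le_max_right _ _, max_lt ht hT⟩
    rw [max_lt_iff] at hs
    exact ⟨s, ⟨hs.1, hsT⟩, hlt.trans_le (hmax s ⟨hs.2.le, hsT⟩ x hx)⟩
  have hgrow : ∃ t ∈ Ico 0 T, ∃ x ∈ Icc (-1) 1, u 0 x < u t x := by
    obtain ⟨s, hs, hlt⟩ := hblow₀ (u 0 0) 0 hT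
    exact ⟨s, Ioo_subset_Ico_self hs, 0, by norm_num, hlt⟩
  obtain ⟨C₂, -, hupper⟩ := hu.exists_origin_le_exp ha₁ hV' hV_cont hu₀ hpos hgrow heven
  obtain ⟨c, hc, horigin⟩ := hu.exists_exp_sub_one_le_origin ha₁ hV₀ hpos hmax hblow₀
  obtain ⟨C₁, hC₁, hlower⟩ :=
    hu.exists_mul_one_sub_abs_mul_exp_le ha₁ ha₂ hT hV heven hc horigin
  refine ⟨C₁, hC₁, max C₁ C₂, le_max_left _ _, fun t ht x hx ↦ ?_⟩
  have hτ : 0 < T - t := sub_pos.2 ht.2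
  refine ⟨hlower t ht x hx, hmax t ⟨by linarith [ht.1], ht.2⟩ x hx,
    (hupper t ⟨by linarith [ht.1], ht.2⟩).trans (Real.exp_le_exp.2 ?_)⟩
  gcongr
  exact le_max_right _ _

end IsMonotoneSolution

end BlowupRate

lemma antitoneOn_of_derivWithin_nonpos {D s : Set ℝ} {g : ℝ → ℝ} (hD : Convex ℝ D) (hDs : D ⊆ s)
    (hg : DifferentiableOn ℝ g s) (hg' : ∀ x ∈ D, derivWithin g s x ≤ 0) : AntitoneOn g D := by
  refine antitoneOn_of_deriv_nonpos hD (hg.continuousOn.mono hDs)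
    (hg.mono (interior_subset.trans hDs)) fun x hx ↦ ?_
  rw [← derivWithin_of_mem_nhds (mem_of_superset (mem_interior_iff_mem_nhds.1 hx) hDs)]
  exact hg' x (interior_subset hx)

theorem stmt18_general {a : ℝ} (ha1 : 1 < a) (ha2 : a < 2) {V φ : ℝ → ℝ}
    (hV_cont : ContinuousOn V (Icc (-1) 1)) (hφ_C2 : ContDiffOn ℝ 2 φ (Ioo (-1) 1))
    (hV_nonneg : ∀ x ∈ Icc (-1 : ℝ) 1, 0 ≤ V x)
    (hV_even : ∀ x ∈ Icc (-1 : ℝ) 1, V (-x) = V x) (hφ_even : ∀ x ∈ Icc (-1 : ℝ) 1, φ (-x) = φ x)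
    (hV0 : 0 < V 0) (hφ0 : 0 < φ 0) (hφ1 : φ 1 = 0)
    (hV_anti : AntitoneOn V (Icc 0 (1 / 3))) (hφ_anti : AntitoneOn φ (Icc 0 (1 / 3)))
    (hVbd : ∀ x ∈ Icc (1 / 3 : ℝ) 1, V x ≤ V (1 / 3))
    (hφbd : ∀ x ∈ Icc (1 / 3 : ℝ) 1, φ x ≤ φ (1 / 3))
    {lam : ℝ} (hlam : 0 < lam) {T : ℝ} (hT : 0 < T) {u : ℝ → ℝ → ℝ}
    (hu_cont : ContinuousOn (fun q : ℝ × ℝ ↦ u q.1 q.2) (Ico 0 T ×ˢ Icc (-1) 1))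
    (hu_nonneg : ∀ t ∈ Ico 0 T, ∀ x ∈ Icc (-1 : ℝ) 1, 0 ≤ u t x)
    (hu_reg : ∀ t ∈ Ioo 0 T, ∀ x ∈ Ioo (-1 : ℝ) 1,
      DifferentiableAt ℝ (fun s ↦ u s x) t ∧ ContDiffAt ℝ 2 (u t) x)
    (heq : ∀ t ∈ Ioo 0 T, ∀ x ∈ Ioo (-1 : ℝ) 1,
      deriv (fun s ↦ u s x) t = deriv (deriv (u t)) x + V x * (u t x * log (1 + u t x) ^ a))
    (hbc : ∀ t ∈ Ioo 0 T, u t (-1) = 0 ∧ u t 1 = 0)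
    (hic : ∀ x ∈ Icc (-1 : ℝ) 1, u 0 x = lam * φ x)
    (hmono : ∀ t ∈ Ioo 0 T, ∀ x ∈ Ioo (-1 : ℝ) 1, 0 ≤ deriv (fun s ↦ u s x) t)
    (hblow : ∀ M : ℝ, ∀ δ > 0, ∃ t, T - δ < t ∧ t < T ∧ ∃ x ∈ Icc (-1 : ℝ) 1, M < u t x) :
    ∃ C₁ C₂ : ℝ, 0 < C₁ ∧ C₁ ≤ C₂ ∧
      ∀ t ∈ Ioo (T / 2) T, ∀ x ∈ Ioo (-1 : ℝ) 1,
        C₁ * (1 - |x|) * exp (C₁ * (T - t) ^ (-(1 / (a - 1)))) ≤ u t x ∧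
        u t x ≤ u t 0 ∧
        u t 0 ≤ exp (C₂ * (T - t) ^ (-(1 / (a - 1)))) := by
  have hVp : IsPeaked V := .of_antitoneOn hV_even hV_anti hVbd
  have hu₀p : IsPeaked (u 0) :=
    (IsPeaked.of_antitoneOn hφ_even hφ_anti hφbd).of_eqOn_const_mul hlam.le hic
  have hu₀ : ContDiffOn ℝ 2 (u 0) (Ioo (-1) 1) :=
    (contDiffOn_const.mul hφ_C2).congr fun x hx ↦ hic x (Ioo_subset_Icc_self hx)
  have hpos : 0 < u 0 0 := by rw [hic 0 (by norm_num)]; positivity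
  have hbc₀ : u 0 (-1) = 0 ∧ u 0 1 = 0 := by
    rw [hu₀p.even 1 (by norm_num), hic 1 (by norm_num), hφ1, mul_zero, and_self]
  have hu : IsMonotoneSolution (logReaction a) V T u :=
    { continuousOn := hu_cont, nonneg := hu_nonneg, regular := hu_reg, deriv_eq := heq,
      boundary := fun t ht ↦ ht.1.eq_or_lt.elim (fun h ↦ h ▸ hbc₀) fun h ↦ hbc t ⟨h, ht.2⟩,
      deriv_nonneg := hmono }
  obtain ⟨C₁, hC₁, C₂, hC₂, hrate⟩ := hu.exists_exp_rate_bounds ha1 ha2 hT hV_nonneg hV_cont hVp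
    hV0 hu₀ hu₀p hpos fun M t ht ↦ by
      obtain ⟨s, hs, hsT, hlarge⟩ := hblow M (T - t) (sub_pos.2 ht.2)
      exact ⟨s, ⟨by linarith, hsT⟩, hlarge⟩
  exact ⟨C₁, C₂, hC₁, hC₂, fun t ht x hx ↦ hrate t ht x (Ioo_subset_Icc_self hx)⟩

theorem stmt18
    (a : ℝ) (ha1 : 1 < a) (ha2 : a < 2)
    (V φ : ℝ → ℝ)
    (hV_C1 : ContDiffOn ℝ 1 V (Icc (-1) 1)) (hφ_C1 : ContDiffOn ℝ 1 φ (Icc (-1) 1))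
    (hV_nonneg : ∀ x ∈ Icc (-1:ℝ) 1, 0 ≤ V x) (hφ_nonneg : ∀ x ∈ Icc (-1:ℝ) 1, 0 ≤ φ x)
    (hV_even : ∀ x ∈ Icc (-1:ℝ) 1, V (-x) = V x) (hφ_even : ∀ x ∈ Icc (-1:ℝ) 1, φ (-x) = φ x)
    (hV0 : 0 < V 0) (hφ0 : 0 < φ 0) (hφ1 : φ 1 = 0)
    (hV' : ∀ x ∈ Icc (0:ℝ) (1/3), derivWithin V (Icc (-1) 1) x ≤ 0)
    (hφ' : ∀ x ∈ Icc (0:ℝ) (1/3), derivWithin φ (Icc (-1) 1) x ≤ 0)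
    (hVbd : ∀ x ∈ Icc (1/3:ℝ) 1, V x ≤ V (1/3))
    (hφbd : ∀ x ∈ Icc (1/3:ℝ) 1, φ x ≤ φ (1/3))
    (hφ_C2 : ContDiffOn ℝ 2 φ (Icc (-1) 1))
    (r : ℝ) (hr : r ∈ Ioo (0:ℝ) 1)
    (hφpos : ∀ x ∈ Icc (0:ℝ) r, 0 < φ x) (hVpos : ∀ x ∈ Icc (0:ℝ) r, 0 < V x)
    (hφ'' : ∀ x ∈ Icc r (1:ℝ), 0 ≤ iteratedDerivWithin 2 φ (Icc (-1) 1) x)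
    (lam : ℝ) (hlam : 0 < lam)
    (T : ℝ) (hT : 0 < T)
    (u : ℝ → ℝ → ℝ)
    (hu_cont : ContinuousOn (fun q : ℝ × ℝ => u q.1 q.2) (Ico 0 T ×ˢ Icc (-1) 1))
    (hu_nonneg : ∀ t ∈ Ico 0 T, ∀ x ∈ Icc (-1:ℝ) 1, 0 ≤ u t x)
    (hu_reg : ∀ t ∈ Ioo 0 T, ∀ x ∈ Ioo (-1:ℝ) 1,
      DifferentiableAt ℝ (fun s => u s x) t ∧ ContDiffAt ℝ 2 (u t) x)
    (heq : ∀ t ∈ Ioo 0 T, ∀ x ∈ Ioo (-1:ℝ) 1,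
      deriv (fun s => u s x) t = deriv (deriv (u t)) x + V x * (u t x * Real.log (1 + u t x) ^ a))
    (hbc : ∀ t ∈ Ioo 0 T, u t (-1) = 0 ∧ u t 1 = 0)
    (hic : ∀ x ∈ Icc (-1:ℝ) 1, u 0 x = lam * φ x)
    (hmono : ∀ t ∈ Ioo 0 T, ∀ x ∈ Ioo (-1:ℝ) 1, 0 ≤ deriv (fun s => u s x) t)
    (hblow : ∀ M : ℝ, ∀ δ > 0, ∃ t, T - δ < t ∧ t < T ∧ ∃ x ∈ Icc (-1:ℝ) 1, M < u t x)
    :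
    ∃ C₁ C₂ : ℝ, 0 < C₁ ∧ C₁ ≤ C₂ ∧
      ∀ t ∈ Ioo (T / 2) T, ∀ x ∈ Ioo (-1:ℝ) 1,
        C₁ * (1 - |x|) * Real.exp (C₁ * (T - t) ^ (-(1 / (a - 1)))) ≤ u t x ∧
        u t x ≤ u t 0 ∧
        u t 0 ≤ Real.exp (C₂ * (T - t) ^ (-(1 / (a - 1)))) := by
  have anti {G : ℝ → ℝ} (hG : ContDiffOn ℝ 1 G (Icc (-1) 1)) :=
    antitoneOn_of_derivWithin_nonpos (convex_Icc (0 : ℝ) (1 / 3))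
      (Icc_subset_Icc (by norm_num) (by norm_num)) (hG.differentiableOn one_ne_zero)
  exact stmt18_general ha1 ha2 hV_C1.continuousOn (hφ_C2.mono Ioo_subset_Icc_self) hV_nonneg
    hV_even hφ_even hV0 hφ0 hφ1 (anti hV_C1 hV') (anti hφ_C1 hφ') hVbd hφbd hlam hT hu_cont
    hu_nonneg hu_reg heq hbc hic hmono hblow
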